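/- arXiv:2506.22421 — 4 statements merged into one kernel-verified Lean document; each statement's English description precedes it below -/
import Mathlib

section
/- Let μ, ν be Borel probability measures on ℝ^{dT} and let w : ℝ^{dT} → [0, ∞) be measurable with ∫ w dμ + ∫ w dν < ∞. Let η be the finite Borel measure on ℝ^{dT} obtained by composing, time step by time step, the lattice infima of the conditional kernels of μ and ν: η(dx) = (μ_1 ⊓ ν_1)(dx_1)(μ_{x_{1:1}} ⊓ ν_{x_{1:1}})(dx_2) ⋯ (μ_{x_{1:T−1}} ⊓ ν_{x_{1:T−1}})(dx_T), where for each t and each x_{1:t} the measure μ_{x_{1:t}} ⊓ ν_{x_{1:t}} is the greatest lower bound of the two conditional kernels in the lattice of finite Borel measures on ℝ^d, and these lattice infima form Borel-measurable sub-probability kernels. Then the supremum over bicausal couplings π of ∫ 2 w(x) 1_{x = y} dπ(x, y) equals 2 ∫ w dη, and consequently ATV_w(μ, ν) = ∫ w dμ + ∫ w dν − 2 ∫ w dη. -/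
open MeasureTheory ProbabilityTheory
open scoped ENNReal

noncomputable section

/-- The path space `ℝ^{dT}`: `T` time steps with state space `ℝ^d`. -/
abbrev Traj (d T : ℕ) : Type := Fin T → Fin d → ℝ

/-- Restriction of a path to its first `t` coordinates. -/
def restr (d : ℕ) {t T : ℕ} (h : t ≤ T) (x : Traj d T) : Traj d t :=
  fun i => x (Fin.castLE h i)

lemma measurable_restr (d : ℕ) {t T : ℕ} (h : t ≤ T) : Measurable (restr d h) :=
  measurable_pi_lambda _ (fun i => measurable_pi_apply _)

/-- σ-algebra generated by the first `t` coordinates of the first component. -/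
def sigmaX (d T : ℕ) {t : ℕ} (h : t ≤ T) : MeasurableSpace (Traj d T × Traj d T) :=
  MeasurableSpace.comap (fun ω => restr d h ω.1) inferInstance

/-- σ-algebra generated by the first `t` coordinates of the second component. -/
def sigmaY (d T : ℕ) {t : ℕ} (h : t ≤ T) : MeasurableSpace (Traj d T × Traj d T) :=
  MeasurableSpace.comap (fun ω => restr d h ω.2) inferInstance

lemma sigmaX_le (d T : ℕ) {t : ℕ} (h : t ≤ T) :
    sigmaX d T h ≤ (inferInstance : MeasurableSpace (Traj d T × Traj d T)) :=
  ((measurable_restr d h).comp measurable_fst).comap_le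

lemma sigmaY_le (d T : ℕ) {t : ℕ} (h : t ≤ T) :
    sigmaY d T h ≤ (inferInstance : MeasurableSpace (Traj d T × Traj d T)) :=
  ((measurable_restr d h).comp measurable_snd).comap_le

/-- A coupling `π` of two laws on the path space is *bicausal* if for each `t < T`,
`σ(Y_1,…,Y_t)` is conditionally independent of `σ(X_1,…,X_T)` given `σ(X_1,…,X_t)`, and
symmetrically. -/
def IsBicausal (d T : ℕ) (π : Measure (Traj d T × Traj d T)) [IsFiniteMeasure π] : Prop :=
  ∀ t, 1 ≤ t → ∀ h : t + 1 ≤ T,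
    CondIndep (sigmaX d T (Nat.le_of_succ_le h)) (sigmaY d T (Nat.le_of_succ_le h))
      (sigmaX d T (le_refl T)) (sigmaX_le d T (Nat.le_of_succ_le h)) π ∧
    CondIndep (sigmaY d T (Nat.le_of_succ_le h)) (sigmaX d T (Nat.le_of_succ_le h))
      (sigmaY d T (le_refl T)) (sigmaY_le d T (Nat.le_of_succ_le h)) π

/-- The set of couplings of `μ` and `ν`. -/
def Cpl {α : Type*} [MeasurableSpace α] (μ ν : Measure α) : Set (Measure (α × α)) :=
  {π | IsProbabilityMeasure π ∧ π.map Prod.fst = μ ∧ π.map Prod.snd = ν}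

/-- The set of bicausal couplings of `μ` and `ν`. -/
def BCpl {d T : ℕ} (μ ν : Measure (Traj d T)) : Set (Measure (Traj d T × Traj d T)) :=
  {π | π ∈ Cpl μ ν ∧ ∃ _ : IsFiniteMeasure π, IsBicausal d T π}

/-- Weighted total variation distance. -/
def TVw {d T : ℕ} (w : Traj d T → ℝ) (μ ν : Measure (Traj d T)) : ℝ≥0∞ :=
  ⨅ π ∈ Cpl μ ν, ∫⁻ q in {q : Traj d T × Traj d T | q.1 ≠ q.2},
    (ENNReal.ofReal (w q.1) + ENNReal.ofReal (w q.2)) ∂π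

/-- Weighted adapted total variation distance. -/
def ATVw {d T : ℕ} (w : Traj d T → ℝ) (μ ν : Measure (Traj d T)) : ℝ≥0∞ :=
  ⨅ π ∈ BCpl μ ν, ∫⁻ q in {q : Traj d T × Traj d T | q.1 ≠ q.2},
    (ENNReal.ofReal (w q.1) + ENNReal.ofReal (w q.2)) ∂π

/-- `p`-th power of the adapted Wasserstein distance (cost `|x-y|_p^p`). -/
def AWpow (p : ℝ) {d T : ℕ} (μ ν : Measure (Traj d T)) : ℝ≥0∞ :=
  ⨅ π ∈ BCpl μ ν, ∫⁻ q, ENNReal.ofReal (∑ i, ∑ j, |q.1 i j - q.2 i j| ^ p) ∂π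

/-- The weight `w_p(x) = 1 + |x|_p^p`. -/
def wp (p : ℝ) {d T : ℕ} (x : Traj d T) : ℝ := 1 + ∑ i, ∑ j, |x i j| ^ p


/-- Iterated composition of one-step kernels, producing a measure on the path space:
`η(dx) = κ₀(dx₁) κ₁(x₁, dx₂) ⋯ κ_{T-1}(x_{1:T-1}, dx_T)`. -/
def iterComp (d : ℕ) (κ : ∀ t : ℕ, Traj d t → Measure (Fin d → ℝ)) :
    ∀ T : ℕ, Measure (Traj d T)
  | 0 => Measure.dirac (fun i => i.elim0)
  | (t + 1) => (iterComp d κ t).bind (fun x => (κ t x).map (Fin.snoc x))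

section Kernels

variable {α β γ Ω : Type*} {mα : MeasurableSpace α} {mβ : MeasurableSpace β}
  {mγ : MeasurableSpace γ} {mΩ : MeasurableSpace Ω}

/-- A conditionally independent variable may be added to the conditioning without changing the
conditional law. -/
lemma map_eq_compProd_of_condIndepFun [StandardBorelSpace Ω] [StandardBorelSpace β] [Nonempty β]
    [StandardBorelSpace γ] [Nonempty γ] {P : Measure Ω} [IsFiniteMeasure P]
    {Z : Ω → α} {Y : Ω → β} {V : Ω → γ} (hZ : Measurable Z) (hY : Measurable Y) (hV : Measurable V)
    {κ : Kernel α γ} [IsMarkovKernel κ] (hind : Y ⟂ᵢ[Z, hZ; P] V)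
    (hκ : P.map (fun ω => (Z ω, V ω)) = P.map Z ⊗ₘ κ) :
    P.map (fun ω => ((Z ω, Y ω), V ω)) = P.map (fun ω => (Z ω, Y ω)) ⊗ₘ κ.prodMkRight β := by
  rw [condIndepFun_iff_condDistrib_prod_ae_eq_prodMkRight hV hY hZ] at hind
  rw [← condDistrib_ae_eq_iff_measure_eq_compProd _ hV.aemeasurable] at hκ ⊢
  refine hind.trans ?_
  have hfst : P.map Z = (P.map (fun ω => (Z ω, Y ω))).map Prod.fst := by
    rw [Measure.map_map measurable_fst (hZ.prodMk hY)]; rfl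
  rw [hfst] at hκ
  filter_upwards [ae_of_ae_map measurable_fst.aemeasurable hκ] with p hp
  exact hp

/-- Conditional independence from a factorisation of the joint law. -/
lemma condIndepFun_of_map_eq_compProd [StandardBorelSpace Ω] [StandardBorelSpace β] [Nonempty β]
    [StandardBorelSpace γ] [Nonempty γ] {P : Measure Ω} [IsFiniteMeasure P]
    {Z : Ω → α} {Y : Ω → β} {V : Ω → γ} (hZ : Measurable Z) (hY : Measurable Y) (hV : Measurable V)
    {κ : Kernel α γ} [IsMarkovKernel κ]
    (h : P.map (fun ω => ((Z ω, Y ω), V ω)) =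
      P.map (fun ω => (Z ω, Y ω)) ⊗ₘ κ.prodMkRight β) :
    Y ⟂ᵢ[Z, hZ; P] V := by
  rw [condIndepFun_iff_condDistrib_prod_ae_eq_prodMkRight hV hY hZ]
  have hfst : P.map Z = (P.map (fun ω => (Z ω, Y ω))).map Prod.fst := by
    rw [Measure.map_map measurable_fst (hZ.prodMk hY)]; rfl
  have hκ : P.map (fun ω => (Z ω, V ω)) = P.map Z ⊗ₘ κ := by
    have hcomp : P.map (fun ω => (Z ω, V ω)) =
        (P.map (fun ω => ((Z ω, Y ω), V ω))).map (fun q => (q.1.1, q.2)) := by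
      rw [Measure.map_map (by fun_prop) (by fun_prop)]; rfl
    rw [hcomp, h, hfst]
    refine Measure.ext_of_lintegral _ fun f hf => ?_
    rw [lintegral_map hf (by fun_prop), Measure.lintegral_compProd (by fun_prop),
      Measure.lintegral_compProd hf, lintegral_map (by fun_prop) measurable_fst]
    rfl
  rw [← condDistrib_ae_eq_iff_measure_eq_compProd _ hV.aemeasurable] at hκ h
  refine h.trans ?_
  rw [hfst] at hκ
  filter_upwards [ae_of_ae_map measurable_fst.aemeasurable hκ] with p hp
  exact hp.symm

/-- A measure dominated by `ρ ⊗ κ` and by `ρ ⊗ η` is dominated by `ρ ⊗ (κ ⊓ η)`. -/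
lemma le_compProd_inf [MeasurableSpace.CountableOrCountablyGenerated α β]
    {ρ : Measure α} [IsFiniteMeasure ρ] {κ η m : Kernel α β} [IsFiniteKernel κ] [IsFiniteKernel η]
    [IsFiniteKernel m] (hm : ∀ x, m x = κ x ⊓ η x) {σ : Measure (α × β)}
    (hκ : σ ≤ ρ ⊗ₘ κ) (hη : σ ≤ ρ ⊗ₘ η) : σ ≤ ρ ⊗ₘ m := by
  set f := κ.rnDeriv (κ + η)
  set g := η.rnDeriv (κ + η)
  have hf : Measurable (fun p : α × β => f p.1 p.2) := κ.measurable_rnDeriv _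
  have hg : Measurable (fun p : α × β => g p.1 p.2) := η.measurable_rnDeriv _
  have hfκ (x : α) : κ x = ((κ + η) x).withDensity (f x) := by
    rw [← Kernel.withDensity_apply _ hf, Kernel.withDensity_rnDeriv_eq]
    exact Measure.absolutelyContinuous_of_le (Measure.le_add_right le_rfl)
  have hgη (x : α) : η x = ((κ + η) x).withDensity (g x) := by
    rw [← Kernel.withDensity_apply _ hg, Kernel.withDensity_rnDeriv_eq]
    exact Measure.absolutelyContinuous_of_le (Measure.le_add_left le_rfl)
  set E : Set (α × β) := {p | f p.1 p.2 ≤ g p.1 p.2}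
  have hE : MeasurableSet E := measurableSet_le hf hg
  have hEx (x : α) : MeasurableSet (Prod.mk x ⁻¹' E) := measurable_prodMk_left hE
  have hle (x : α) (A : Set β) (hA : MeasurableSet A) :
      κ x (A ∩ Prod.mk x ⁻¹' E) + η x (A \ Prod.mk x ⁻¹' E) ≤ m x A := by
    have h1 : (κ x).restrict (Prod.mk x ⁻¹' E) + (η x).restrict (Prod.mk x ⁻¹' E)ᶜ ≤ m x := by
      rw [hm]
      refine le_inf ?_ ?_
      · calc _ ≤ (κ x).restrict (Prod.mk x ⁻¹' E) + (κ x).restrict (Prod.mk x ⁻¹' E)ᶜ := by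
              refine add_le_add le_rfl (Measure.le_iff.2 fun s hs => ?_)
              rw [Measure.restrict_apply hs, Measure.restrict_apply hs, hfκ, hgη,
                withDensity_apply _ (hs.inter (hEx x).compl),
                withDensity_apply _ (hs.inter (hEx x).compl)]
              refine setLIntegral_mono (hf.comp measurable_prodMk_left) fun y hy => ?_
              exact (not_le.1 (show ¬ f x y ≤ g x y from hy.2)).le
          _ = _ := Measure.restrict_add_restrict_compl (hEx x)
      · calc _ ≤ (η x).restrict (Prod.mk x ⁻¹' E) + (η x).restrict (Prod.mk x ⁻¹' E)ᶜ := by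
              refine add_le_add (Measure.le_iff.2 fun s hs => ?_) le_rfl
              rw [Measure.restrict_apply hs, Measure.restrict_apply hs, hfκ, hgη,
                withDensity_apply _ (hs.inter (hEx x)),
                withDensity_apply _ (hs.inter (hEx x))]
              exact setLIntegral_mono (hg.comp measurable_prodMk_left) fun y hy => hy.2
          _ = _ := Measure.restrict_add_restrict_compl (hEx x)
    have h2 := h1 A
    rwa [Measure.add_apply, Measure.restrict_apply hA, Measure.restrict_apply hA] at h2
  refine Measure.le_iff.2 fun A hA => ?_
  calc σ A = σ (A ∩ E) + σ (A \ E) := (measure_inter_add_sdiff A hE).symm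
    _ ≤ (ρ ⊗ₘ κ) (A ∩ E) + (ρ ⊗ₘ η) (A \ E) := add_le_add (hκ _) (hη _)
    _ = ∫⁻ x, (κ x (Prod.mk x ⁻¹' (A ∩ E)) + η x (Prod.mk x ⁻¹' (A \ E))) ∂ρ := by
        rw [Measure.compProd_apply (hA.inter hE), Measure.compProd_apply (hA.diff hE),
          lintegral_add_left (Kernel.measurable_kernel_prodMk_left (hA.inter hE))]
    _ ≤ ∫⁻ x, m x (Prod.mk x ⁻¹' A) ∂ρ :=
        lintegral_mono fun x => hle x _ (measurable_prodMk_left hA)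
    _ = (ρ ⊗ₘ m) A := (Measure.compProd_apply hA).symm

/-- The coupling of two Markov kernels with common lower bound `m`: the common part `m` is
put on the diagonal and the remainders are coupled independently. -/
lemma exists_maximal_coupling {κ η m : Kernel α β} [IsMarkovKernel κ] [IsMarkovKernel η]
    [IsFiniteKernel m] (hmκ : ∀ x, m x ≤ κ x) (hmη : ∀ x, m x ≤ η x) :
    ∃ K : Kernel α (β × β), (∀ x, (K x).map Prod.fst = κ x) ∧ (∀ x, (K x).map Prod.snd = η x) ∧
      ∀ x, (m x).map (fun a => (a, a)) ≤ K x := by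
  have hsub (ξ : Kernel α β) [IsMarkovKernel ξ] (h : ∀ x, m x ≤ ξ x) :
      ∃ r : Kernel α β, IsFiniteKernel r ∧ ∀ x, r x + m x = ξ x := by
    refine ⟨⟨fun x => ξ x - m x, Measure.measurable_of_measurable_coe _ fun s hs => ?_⟩,
      ⟨⟨1, ENNReal.one_lt_top, fun x => ?_⟩⟩, fun x => Measure.sub_add_cancel_of_le (h x)⟩
    · simp_rw [Measure.sub_apply hs (h _)]
      exact (ξ.measurable_coe hs).sub (m.measurable_coe hs)
    · exact (Measure.sub_le (μ := ξ x) (ν := m x) Set.univ).trans prob_le_one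
  obtain ⟨r, _, hr⟩ := hsub κ hmκ
  obtain ⟨s, _, hs⟩ := hsub η hmη
  have hmass (x : α) : r x Set.univ = s x Set.univ := by
    have h1 : (r x + m x) Set.univ = (s x + m x) Set.univ := by rw [hr, hs]; simp
    rw [Measure.add_apply, Measure.add_apply] at h1
    exact (ENNReal.add_left_inj (measure_ne_top _ _)).1 h1
  have hcancel (x : α) (c : ℝ≥0∞) (hc : c ≤ r x Set.univ) :
      (r x Set.univ)⁻¹ * (c * r x Set.univ) = c := by
    rcases eq_or_ne (r x Set.univ) 0 with h0 | h0
    · rw [h0] at hc ⊢; simp [nonpos_iff_eq_zero.1 hc]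
    · rw [mul_comm c, ← mul_assoc, ENNReal.inv_mul_cancel h0 (measure_ne_top _ _), one_mul]
  refine ⟨⟨fun x => (m x).map (fun a => (a, a)) + (r x Set.univ)⁻¹ • (r x).prod (s x),
    Measure.measurable_of_measurable_coe _ fun A hA => ?_⟩, fun x => ?_, fun x => ?_, fun x => ?_⟩
  · have hd : Measurable fun a : β => (a, a) := by fun_prop
    simp only [Measure.add_apply, Measure.smul_apply, smul_eq_mul, Measure.map_apply hd hA]
    refine (m.measurable_coe (hd hA)).add ((r.measurable_coe .univ).inv.mul ?_)
    have := (r ×ₖ s).measurable_coe hA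
    simpa only [Kernel.prod_apply] using this
  · ext A hA
    simp only [Kernel.coe_mk]
    rw [← hr x, Measure.map_apply measurable_fst hA, Measure.add_apply, Measure.smul_apply,
      Measure.map_apply (by fun_prop) (measurable_fst hA), ← Set.prod_univ, Measure.prod_prod,
      smul_eq_mul, ← hmass, hcancel x _ (measure_mono (Set.subset_univ A)), add_comm,
      Measure.add_apply]
    simp [Set.mk_preimage_prod]
  · ext A hA
    simp only [Kernel.coe_mk]
    rw [← hs x, Measure.map_apply measurable_snd hA, Measure.add_apply, Measure.smul_apply,
      Measure.map_apply (by fun_prop) (measurable_snd hA), ← Set.univ_prod, Measure.prod_prod,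
      smul_eq_mul, mul_comm (r x _),
      hcancel x _ ((measure_mono (Set.subset_univ A)).trans (hmass x).ge), add_comm,
      Measure.add_apply]
    simp [Set.mk_preimage_prod]
  · exact Measure.le_add_right le_rfl

/-- A kernel coupling `κ x` with `η y`, maximally on the diagonal `x = y`. -/
lemma exists_diagonal_coupling [MeasurableEq α] {κ η m : Kernel α β} [IsMarkovKernel κ]
    [IsMarkovKernel η] [IsFiniteKernel m] (hmκ : ∀ x, m x ≤ κ x) (hmη : ∀ x, m x ≤ η x) :
    ∃ K : Kernel (α × α) (β × β), IsMarkovKernel K ∧ (∀ p, (K p).map Prod.fst = κ p.1) ∧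
      (∀ p, (K p).map Prod.snd = η p.2) ∧ ∀ x, (m x).map (fun a => (a, a)) ≤ K (x, x) := by
  obtain ⟨K, hK1, hK2, hKm⟩ := exists_maximal_coupling hmκ hmη
  have hD : MeasurableSet {p : α × α | p.1 = p.2} :=
    measurableSet_eq_fun measurable_fst measurable_snd
  classical
  let J : Kernel (α × α) (β × β) := Kernel.piecewise hD (K.comap Prod.fst measurable_fst)
    (κ.comap Prod.fst measurable_fst ×ₖ η.comap Prod.snd measurable_snd)
  have hJ1 (p : α × α) : (J p).map Prod.fst = κ p.1 := by
    by_cases h : p.1 = p.2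
    · simp [J, Kernel.piecewise_apply, h, Kernel.comap_apply, hK1]
    · simp [J, Kernel.piecewise_apply, h, Kernel.comap_apply, Kernel.prod_apply]
  refine ⟨J, ⟨fun p => ⟨?_⟩⟩, hJ1, fun p => ?_, fun x => ?_⟩
  · have := congrArg (fun ξ : Measure β => ξ Set.univ) (hJ1 p)
    simpa [Measure.map_apply measurable_fst MeasurableSet.univ] using this
  · by_cases h : p.1 = p.2
    · simp [J, Kernel.piecewise_apply, h, Kernel.comap_apply, hK2]
    · simp [J, Kernel.piecewise_apply, h, Kernel.comap_apply, Kernel.prod_apply]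
  · simpa [J, Kernel.piecewise_apply, Kernel.comap_apply] using hKm x

/-- A factorisation of the joint law is inherited by the restriction to the diagonal event. -/
lemma map_restrict_eq_compProd [MeasurableEq α] {P : Measure Ω} [IsFiniteMeasure P]
    {Z Y : Ω → α} {V : Ω → γ} (hZ : Measurable Z) (hY : Measurable Y) (hV : Measurable V)
    {κ : Kernel α γ} [IsMarkovKernel κ]
    (h : P.map (fun ω => ((Z ω, Y ω), V ω)) =
      P.map (fun ω => (Z ω, Y ω)) ⊗ₘ κ.prodMkRight α) :
    (P.restrict {ω | Z ω = Y ω}).map (fun ω => (Z ω, V ω)) =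
      (P.restrict {ω | Z ω = Y ω}).map Z ⊗ₘ κ := by
  have hD : MeasurableSet {ω | Z ω = Y ω} := measurableSet_eq_fun hZ hY
  have hE : MeasurableSet {p : α × α | p.1 = p.2} :=
    measurableSet_eq_fun measurable_fst measurable_snd
  have hE' : MeasurableSet {q : (α × α) × γ | q.1.1 = q.1.2} := measurable_fst hE
  refine Measure.ext_of_lintegral _ fun f hf => ?_
  have hg : Measurable fun q : (α × α) × γ =>
      {q : (α × α) × γ | q.1.1 = q.1.2}.indicator (fun q => f (q.1.1, q.2)) q :=
    Measurable.indicator (by fun_prop) hE'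
  have h1 := congrArg (fun ξ : Measure ((α × α) × γ) => ∫⁻ q,
      {q : (α × α) × γ | q.1.1 = q.1.2}.indicator (fun q => f (q.1.1, q.2)) q ∂ξ) h
  rw [lintegral_map hg (by fun_prop), Measure.lintegral_compProd hg,
    lintegral_map hg.lintegral_kernel_prod_right' (by fun_prop)] at h1
  rw [lintegral_map hf (by fun_prop), Measure.lintegral_compProd hf,
    lintegral_map hf.lintegral_kernel_prod_right' hZ, ← lintegral_indicator hD,
    ← lintegral_indicator hD]
  refine Eq.trans ?_ (h1.trans ?_)
  · rfl
  · refine lintegral_congr fun ω => ?_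
    by_cases hω : Z ω = Y ω <;> simp [Set.indicator, hω, Kernel.prodMkRight_apply]

lemma compProd_mono_left {ρ σ : Measure α} [IsFiniteMeasure ρ] [IsFiniteMeasure σ] (h : ρ ≤ σ)
    (κ : Kernel α β) [IsFiniteKernel κ] : ρ ⊗ₘ κ ≤ σ ⊗ₘ κ := by
  refine Measure.le_iff.2 fun A hA => ?_
  rw [Measure.compProd_apply hA, Measure.compProd_apply hA]
  exact lintegral_mono' h le_rfl

end Kernels


section Paths

variable {d : ℕ}

/-- Appending one more state to a path. -/
def snocPath (d t : ℕ) (p : Traj d t × (Fin d → ℝ)) : Traj d (t + 1) := Fin.snoc p.1 p.2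

lemma measurable_snocPath (d t : ℕ) : Measurable (snocPath d t) := by
  refine measurable_pi_lambda _ fun i => ?_
  induction i using Fin.lastCases with
  | last => simpa [snocPath] using measurable_snd
  | cast i =>
    simp only [snocPath, Fin.snoc_castSucc]
    exact (measurable_pi_apply i).comp measurable_fst

lemma snocPath_injective (d t : ℕ) : Function.Injective (snocPath d t) := by
  rintro ⟨x, a⟩ ⟨y, b⟩ h
  have := Fin.snoc_injective2 h
  exact Prod.ext this.1 this.2

lemma measurable_restr_fst {s t : ℕ} (h : s ≤ t) :
    Measurable fun ω : Traj d t × Traj d t => restr d h ω.1 :=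
  (measurable_restr d h).comp measurable_fst

lemma measurable_restr_snd {s t : ℕ} (h : s ≤ t) :
    Measurable fun ω : Traj d t × Traj d t => restr d h ω.2 :=
  (measurable_restr d h).comp measurable_snd

lemma restr_snocPath {s t : ℕ} (h : s ≤ t) (p : Traj d t × (Fin d → ℝ)) :
    restr d (Nat.le_succ_of_le h) (snocPath d t p) = restr d h p.1 := by
  funext i
  exact Fin.snoc_castSucc (α := fun _ => Fin d → ℝ) p.2 p.1 (Fin.castLE h i)

lemma snocPath_restr {t T : ℕ} (h : t + 1 ≤ T) (x : Traj d T) :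
    snocPath d t (restr d (Nat.le_of_succ_le h) x, x ⟨t, h⟩) = restr d h x := by
  funext i
  induction i using Fin.lastCases with
  | last => simp [snocPath, restr]; rfl
  | cast i => simp [snocPath, restr]

lemma restr_succ_eq_iff {t T : ℕ} (h : t + 1 ≤ T) (x y : Traj d T) :
    restr d h x = restr d h y ↔
      restr d (Nat.le_of_succ_le h) x = restr d (Nat.le_of_succ_le h) y ∧
        x ⟨t, h⟩ = y ⟨t, h⟩ := by
  rw [← snocPath_restr, ← snocPath_restr, (snocPath_injective d t).eq_iff, Prod.mk.injEq]

lemma bind_map_snoc {t : ℕ} (ρ : Measure (Traj d t)) [IsFiniteMeasure ρ]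
    (κ : Kernel (Traj d t) (Fin d → ℝ)) [IsFiniteKernel κ] :
    ρ.bind (fun x => (κ x).map (Fin.snoc x)) = (ρ ⊗ₘ κ).map (snocPath d t) := by
  have hx (x : Traj d t) : Measurable (fun a : Fin d → ℝ => snocPath d t (x, a)) :=
    (measurable_snocPath d t).comp measurable_prodMk_left
  have hcoe {A : Set (Traj d (t + 1))} (hA : MeasurableSet A) (x : Traj d t) :
      (κ x).map (Fin.snoc x) A = κ x (Prod.mk x ⁻¹' (snocPath d t ⁻¹' A)) :=
    Measure.map_apply (hx x) hA
  have hm : Measurable (fun x => (κ x).map (Fin.snoc x : _ → Traj d (t + 1))) := by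
    refine Measure.measurable_of_measurable_coe _ fun A hA => ?_
    simp_rw [hcoe hA]
    exact Kernel.measurable_kernel_prodMk_left (measurable_snocPath d t hA)
  ext A hA
  rw [Measure.bind_apply hA hm.aemeasurable, Measure.map_apply (measurable_snocPath d t) hA,
    Measure.compProd_apply (measurable_snocPath d t hA)]
  simp_rw [hcoe hA]

instance isFiniteMeasure_iterComp (κ : ∀ t, Kernel (Traj d t) (Fin d → ℝ))
    [∀ t, IsFiniteKernel (κ t)] (t : ℕ) : IsFiniteMeasure (iterComp d (fun t x => κ t x) t) := by
  induction t with
  | zero => rw [iterComp]; infer_instance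
  | succ t ih => rw [iterComp, bind_map_snoc]; infer_instance

lemma iterComp_succ (κ : ∀ t, Kernel (Traj d t) (Fin d → ℝ)) [∀ t, IsFiniteKernel (κ t)] (t : ℕ) :
    iterComp d (fun t x => κ t x) (t + 1) =
      (iterComp d (fun t x => κ t x) t ⊗ₘ κ t).map (snocPath d t) := by
  rw [iterComp, bind_map_snoc]

/-- Every probability measure on paths of length zero is the Dirac mass. -/
lemma eq_iterComp_zero (κ : ∀ t, Traj d t → Measure (Fin d → ℝ)) (ρ : Measure (Traj d 0))
    [IsProbabilityMeasure ρ] : ρ = iterComp d κ 0 := by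
  rw [iterComp]
  ext A -
  rcases A.eq_empty_or_nonempty with rfl | hA
  · simp
  · rw [Subsingleton.eq_univ_of_nonempty hA]; simp

lemma map_restr_eq_iterComp {T : ℕ} {μ : Measure (Traj d T)} [IsProbabilityMeasure μ]
    {κ : ∀ t, Kernel (Traj d t) (Fin d → ℝ)} [∀ t, IsMarkovKernel (κ t)]
    (hdis : ∀ t, ∀ h : t + 1 ≤ T, μ.map (restr d h) =
      (μ.map (restr d (Nat.le_of_succ_le h))).bind (fun x => (κ t x).map (Fin.snoc x)))
    (t : ℕ) (h : t ≤ T) : μ.map (restr d h) = iterComp d (fun t x => κ t x) t := by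
  induction t with
  | zero =>
    have := Measure.isProbabilityMeasure_map (μ := μ) (measurable_restr d h).aemeasurable
    exact eq_iterComp_zero _ _
  | succ t ih => rw [hdis t h, ih, iterComp]

lemma map_restr_next {T t : ℕ} (h : t + 1 ≤ T) {μ : Measure (Traj d T)} [IsProbabilityMeasure μ]
    {κ : Kernel (Traj d t) (Fin d → ℝ)} [IsMarkovKernel κ]
    (hdis : μ.map (restr d h) =
      (μ.map (restr d (Nat.le_of_succ_le h))).bind (fun x => (κ x).map (Fin.snoc x))) :
    μ.map (fun x => (restr d (Nat.le_of_succ_le h) x, x ⟨t, h⟩)) =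
      μ.map (restr d (Nat.le_of_succ_le h)) ⊗ₘ κ := by
  rw [bind_map_snoc] at hdis
  have hu : Measurable fun y : Traj d (t + 1) => (restr d (Nat.le_succ t) y, y (Fin.last t)) :=
    (measurable_restr d _).prodMk (measurable_pi_apply _)
  have h1 := congrArg (Measure.map
    fun y : Traj d (t + 1) => (restr d (Nat.le_succ t) y, y (Fin.last t))) hdis
  rw [Measure.map_map hu (measurable_restr d h), Measure.map_map hu (measurable_snocPath d t)] at h1
  have hid : (fun y : Traj d (t + 1) => (restr d (Nat.le_succ t) y, y (Fin.last t))) ∘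
      snocPath d t = id := by
    funext p
    refine Prod.ext (restr_snocPath le_rfl p) ?_
    simp [snocPath]
  rw [hid, Measure.map_id] at h1
  exact h1

end Paths

section UpperBound

variable {d T : ℕ}

/-- The law of the first marginal of `π` up to time `t` on the event that both paths agree
up to time `t`. -/
def diagLaw (π : Measure (Traj d T × Traj d T)) {t : ℕ} (h : t ≤ T) : Measure (Traj d t) :=
  (π.restrict {ω | restr d h ω.1 = restr d h ω.2}).map (fun ω => restr d h ω.1)

instance (π : Measure (Traj d T × Traj d T)) [IsFiniteMeasure π] {t : ℕ} (h : t ≤ T) :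
    IsFiniteMeasure (diagLaw π h) := by
  unfold diagLaw; infer_instance

/-- If one coordinate `p` of `π` is causal with respect to the other coordinate `q`, then on
the event of agreement up to time `t` the next state of `p` is distributed according to its own
conditional kernel. -/
lemma map_restrict_next {π : Measure (Traj d T × Traj d T)} [IsProbabilityMeasure π]
    {p q : Traj d T × Traj d T → Traj d T} (hp : Measurable p) (hq : Measurable q)
    {t : ℕ} (h : t + 1 ≤ T) {κ : Kernel (Traj d t) (Fin d → ℝ)} [IsMarkovKernel κ]
    (hdis : (π.map p).map (restr d h) =
      ((π.map p).map (restr d (Nat.le_of_succ_le h))).bind (fun x => (κ x).map (Fin.snoc x)))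
    (hind : (fun ω => restr d (Nat.le_of_succ_le h) (q ω)) ⟂ᵢ[
      fun ω => restr d (Nat.le_of_succ_le h) (p ω),
      (measurable_restr d _).comp hp; π] (fun ω => restr d le_rfl (p ω))) :
    (π.restrict {ω | restr d (Nat.le_of_succ_le h) (p ω) =
        restr d (Nat.le_of_succ_le h) (q ω)}).map
        (fun ω => (restr d (Nat.le_of_succ_le h) (p ω), p ω ⟨t, h⟩)) =
      (π.restrict {ω | restr d (Nat.le_of_succ_le h) (p ω) =
        restr d (Nat.le_of_succ_le h) (q ω)}).map
        (fun ω => restr d (Nat.le_of_succ_le h) (p ω)) ⊗ₘ κ := by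
  have hr := measurable_restr d (Nat.le_of_succ_le h)
  have hv : Measurable fun x : Traj d T => x ⟨t, h⟩ := measurable_pi_apply _
  refine map_restrict_eq_compProd (hr.comp hp) (hr.comp hq) (hv.comp hp) ?_
  refine map_eq_compProd_of_condIndepFun (hr.comp hp) (hr.comp hq) (hv.comp hp)
    (hind.comp measurable_id hv) ?_
  have := Measure.isProbabilityMeasure_map (μ := π) hp.aemeasurable
  have hnext := map_restr_next h hdis
  rw [Measure.map_map (hr.prodMk hv) hp, Measure.map_map hr hp] at hnext
  exact hnext

lemma IsBicausal.condIndepFun {π : Measure (Traj d T × Traj d T)} [IsFiniteMeasure π]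
    (hπ : IsBicausal d T π) {t : ℕ} (h : t + 1 ≤ T) :
    ((fun ω => restr d (Nat.le_of_succ_le h) ω.2) ⟂ᵢ[
      fun ω => restr d (Nat.le_of_succ_le h) ω.1,
      measurable_restr_fst (Nat.le_of_succ_le h); π] (fun ω => restr d le_rfl ω.1)) ∧
    ((fun ω => restr d (Nat.le_of_succ_le h) ω.1) ⟂ᵢ[
      fun ω => restr d (Nat.le_of_succ_le h) ω.2,
      measurable_restr_snd (Nat.le_of_succ_le h); π] (fun ω => restr d le_rfl ω.2)) := by
  rcases Nat.eq_zero_or_pos t with rfl | ht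
  · have hc (p : Traj d T × Traj d T → Traj d T) :
        (fun ω => restr d (Nat.le_of_succ_le h) (p ω)) = fun _ => (fun i => i.elim0) :=
      funext fun _ => Subsingleton.elim _ _
    constructor
    · rw [hc Prod.snd]
      exact condIndepFun_const_left
        (hm' := (measurable_restr_fst (Nat.le_of_succ_le h)).comap_le) _ _
    · rw [hc Prod.fst]
      exact condIndepFun_const_left
        (hm' := (measurable_restr_snd (Nat.le_of_succ_le h)).comap_le) _ _
  · exact hπ t ht h

/-- Under a bicausal coupling, the agreement part of the law is dominated by the composition of
the lattice infima of the conditional kernels. -/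
lemma diagLaw_le_iterComp {π : Measure (Traj d T × Traj d T)} [IsProbabilityMeasure π]
    (hπ : IsBicausal d T π) {κ η m : ∀ t, Kernel (Traj d t) (Fin d → ℝ)}
    [∀ t, IsMarkovKernel (κ t)] [∀ t, IsMarkovKernel (η t)] [∀ t, IsFiniteKernel (m t)]
    (hm : ∀ t x, m t x = κ t x ⊓ η t x)
    (hκ : ∀ t, ∀ h : t + 1 ≤ T, (π.map Prod.fst).map (restr d h) =
      ((π.map Prod.fst).map (restr d (Nat.le_of_succ_le h))).bind
        (fun x => (κ t x).map (Fin.snoc x)))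
    (hη : ∀ t, ∀ h : t + 1 ≤ T, (π.map Prod.snd).map (restr d h) =
      ((π.map Prod.snd).map (restr d (Nat.le_of_succ_le h))).bind
        (fun x => (η t x).map (Fin.snoc x)))
    (t : ℕ) (h : t ≤ T) : diagLaw π h ≤ iterComp d (fun t x => m t x) t := by
  induction t with
  | zero =>
    have hX : Measurable fun ω : Traj d T × Traj d T => restr d h ω.1 := measurable_restr_fst h
    have := Measure.isProbabilityMeasure_map (μ := π) hX.aemeasurable
    rw [← eq_iterComp_zero _ (π.map fun ω => restr d h ω.1)]
    exact Measure.map_mono Measure.restrict_le_self hX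
  | succ t ih =>
    set h' : t ≤ T := Nat.le_of_succ_le h
    have hr := measurable_restr d h'
    have hv : Measurable fun x : Traj d T => x ⟨t, h⟩ := measurable_pi_apply _
    have hX : Measurable fun ω : Traj d T × Traj d T => (restr d h' ω.1, ω.1 ⟨t, h⟩) :=
      (hr.prodMk hv).comp measurable_fst
    have hY : Measurable fun ω : Traj d T × Traj d T => (restr d h' ω.2, ω.2 ⟨t, h⟩) :=
      (hr.prodMk hv).comp measurable_snd
    have hD : MeasurableSet {ω : Traj d T × Traj d T | restr d h' ω.1 = restr d h' ω.2} :=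
      measurableSet_eq_fun (measurable_restr_fst h') (measurable_restr_snd h')
    have hD' : MeasurableSet {ω : Traj d T × Traj d T | restr d h ω.1 = restr d h ω.2} :=
      measurableSet_eq_fun (measurable_restr_fst h) (measurable_restr_snd h)
    have hsub : {ω : Traj d T × Traj d T | restr d h ω.1 = restr d h ω.2} ⊆
        {ω | restr d h' ω.1 = restr d h' ω.2} := fun ω hω => ((restr_succ_eq_iff h _ _).1 hω).1
    set σ := (π.restrict {ω | restr d h ω.1 = restr d h ω.2}).map
      (fun ω => (restr d h' ω.1, ω.1 ⟨t, h⟩)) with hσ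
    have hσκ : σ ≤ diagLaw π h' ⊗ₘ κ t := by
      rw [diagLaw, ← map_restrict_next measurable_fst measurable_snd h (hκ t h)
        (hπ.condIndepFun h).1]
      exact Measure.map_mono (Measure.restrict_mono hsub le_rfl) hX
    have hση : σ ≤ diagLaw π h' ⊗ₘ η t := by
      have hσ' : σ = (π.restrict {ω | restr d h ω.1 = restr d h ω.2}).map
          (fun ω => (restr d h' ω.2, ω.2 ⟨t, h⟩)) := by
        refine Measure.map_congr ?_
        filter_upwards [ae_restrict_mem hD'] with ω hω
        exact Prod.ext ((restr_succ_eq_iff h _ _).1 hω).1 ((restr_succ_eq_iff h _ _).1 hω).2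
      have hdiag : diagLaw π h' = (π.restrict {ω | restr d h' ω.2 = restr d h' ω.1}).map
          (fun ω => restr d h' ω.2) := by
        simp_rw [eq_comm (a := restr d h' (Prod.snd _))]
        refine Measure.map_congr ?_
        filter_upwards [ae_restrict_mem hD] with ω hω
        exact hω
      rw [hdiag, ← map_restrict_next measurable_snd measurable_fst h (hη t h)
        (hπ.condIndepFun h).2, hσ']
      refine Measure.map_mono (Measure.restrict_mono (fun ω hω => (hsub hω).symm) le_rfl) hY
    have hsucc : diagLaw π h = σ.map (snocPath d t) := by
      rw [hσ, Measure.map_map (measurable_snocPath d t) hX, diagLaw]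
      congr 1
      funext ω
      exact (snocPath_restr h ω.1).symm
    rw [hsucc, iterComp_succ]
    refine Measure.map_mono ?_ (measurable_snocPath d t)
    exact (le_compProd_inf (hm t) hσκ hση).trans (compProd_mono_left (ih h') _)

end UpperBound

section Coupling

variable {d : ℕ}

/-- Appending one more state to both paths of a pair. -/
def snocPair (d t : ℕ) (p : (Traj d t × Traj d t) × ((Fin d → ℝ) × (Fin d → ℝ))) :
    Traj d (t + 1) × Traj d (t + 1) :=
  (snocPath d t (p.1.1, p.2.1), snocPath d t (p.1.2, p.2.2))

lemma measurable_snocPair (d t : ℕ) : Measurable (snocPair d t) :=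
  ((measurable_snocPath d t).comp (by fun_prop)).prodMk
    ((measurable_snocPath d t).comp (by fun_prop))

/-- The law of a pair of paths built step by step from the joint transition kernels `K`. -/
def pairLaw (K : ∀ t, Kernel (Traj d t × Traj d t) ((Fin d → ℝ) × (Fin d → ℝ))) :
    ∀ t, Measure (Traj d t × Traj d t)
  | 0 => Measure.dirac (fun i => i.elim0, fun i => i.elim0)
  | t + 1 => (pairLaw K t ⊗ₘ K t).map (snocPair d t)

lemma map_fst_swap_kernel
    {K : ∀ t, Kernel (Traj d t × Traj d t) ((Fin d → ℝ) × (Fin d → ℝ))}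
    {κ : ∀ t, Kernel (Traj d t) (Fin d → ℝ)} (hK : ∀ t p, (K t p).map Prod.snd = κ t p.2) (t : ℕ)
    (p : Traj d t × Traj d t) :
    (((K t).comap Prod.swap measurable_swap).map Prod.swap p).map Prod.fst = κ t p.1 := by
  rw [Kernel.map_apply _ measurable_swap, Measure.map_map measurable_fst measurable_swap,
    Kernel.comap_apply]
  exact hK t p.swap

variable (K : ∀ t, Kernel (Traj d t × Traj d t) ((Fin d → ℝ) × (Fin d → ℝ)))
  [∀ t, IsMarkovKernel (K t)]

instance isProbabilityMeasure_pairLaw (t : ℕ) : IsProbabilityMeasure (pairLaw K t) := by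
  induction t with
  | zero => rw [pairLaw]; infer_instance
  | succ t ih =>
    rw [pairLaw]
    exact Measure.isProbabilityMeasure_map (measurable_snocPair d t).aemeasurable

lemma lintegral_pairLaw_succ (t : ℕ) {f : Traj d (t + 1) × Traj d (t + 1) → ℝ≥0∞}
    (hf : Measurable f) :
    ∫⁻ q, f q ∂(pairLaw K (t + 1)) =
      ∫⁻ p, ∫⁻ a, f (snocPair d t (p, a)) ∂(K t p) ∂(pairLaw K t) := by
  rw [pairLaw, lintegral_map hf (measurable_snocPair d t),
    Measure.lintegral_compProd (hf.fun_comp (measurable_snocPair d t))]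

lemma measurable_restr_pair {t s : ℕ} (h : t ≤ s) :
    Measurable fun ω : Traj d s × Traj d s => (restr d h ω.1, restr d h ω.2) :=
  (measurable_restr_fst h).prodMk (measurable_restr_snd h)

lemma map_restr_pairLaw {t s : ℕ} (h : t ≤ s) :
    (pairLaw K s).map (fun ω => (restr d h ω.1, restr d h ω.2)) = pairLaw K t := by
  induction s, h using Nat.le_induction with
  | base => exact Measure.map_id
  | succ s h ih =>
    refine Measure.ext_of_lintegral _ fun f hf => ?_
    rw [lintegral_map hf (measurable_restr_pair _), lintegral_pairLaw_succ K s
      (hf.fun_comp (measurable_restr_pair _)), ← ih, lintegral_map hf (measurable_restr_pair _)]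
    simp [snocPair, restr_snocPath h]

instance isMarkovKernel_swap (t : ℕ) :
    IsMarkovKernel (((K t).comap Prod.swap measurable_swap).map Prod.swap) :=
  Kernel.IsMarkovKernel.map _ measurable_swap

lemma pairLaw_swap (t : ℕ) :
    (pairLaw K t).map Prod.swap =
      pairLaw (fun t => ((K t).comap Prod.swap measurable_swap).map Prod.swap) t := by
  induction t with
  | zero => rw [pairLaw, pairLaw, Measure.map_dirac' measurable_swap]; rfl
  | succ t ih =>
    refine Measure.ext_of_lintegral _ fun f hf => ?_
    have hg : Measurable fun p : (Traj d t × Traj d t) × ((Fin d → ℝ) × (Fin d → ℝ)) =>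
        f (snocPair d t p) := hf.fun_comp (measurable_snocPair d t)
    rw [lintegral_map hf measurable_swap, lintegral_pairLaw_succ _ _ (hf.fun_comp measurable_swap),
      lintegral_pairLaw_succ _ _ hf, ← ih,
      lintegral_map hg.lintegral_kernel_prod_right' measurable_swap]
    refine lintegral_congr fun p => ?_
    rw [Kernel.map_apply _ measurable_swap, Kernel.comap_apply, Prod.swap_swap,
      lintegral_map (hg.fun_comp measurable_prodMk_left) measurable_swap]
    rfl

variable {K} {κ : ∀ t, Kernel (Traj d t) (Fin d → ℝ)} [∀ t, IsMarkovKernel (κ t)]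

lemma map_fst_pairLaw (hK : ∀ t p, (K t p).map Prod.fst = κ t p.1) (t : ℕ) :
    (pairLaw K t).map Prod.fst = iterComp d (fun t x => κ t x) t := by
  induction t with
  | zero =>
    have := Measure.isProbabilityMeasure_map (μ := pairLaw K 0) measurable_fst.aemeasurable
    exact eq_iterComp_zero _ _
  | succ t ih =>
    refine Measure.ext_of_lintegral _ fun f hf => ?_
    have hg : Measurable fun p : Traj d t × (Fin d → ℝ) => f (snocPath d t p) :=
      hf.fun_comp (measurable_snocPath d t)
    rw [iterComp_succ, ← ih, lintegral_map hf (measurable_snocPath d t),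
      Measure.lintegral_compProd hg, lintegral_map hg.lintegral_kernel_prod_right' measurable_fst,
      lintegral_map hf measurable_fst, lintegral_pairLaw_succ _ _ (hf.fun_comp measurable_fst)]
    refine lintegral_congr fun p => ?_
    rw [← hK, lintegral_map (hg.fun_comp measurable_prodMk_left) measurable_fst]
    rfl

/-- The law of the first path given both paths up to time `t` only depends on the first one. -/
lemma exists_kernel_pairLaw (hK : ∀ t p, (K t p).map Prod.fst = κ t p.1) {t s : ℕ} (h : t ≤ s) :
    ∃ G : Kernel (Traj d t) (Traj d s), IsMarkovKernel G ∧
      (pairLaw K s).map (fun ω => ((restr d h ω.1, restr d h ω.2), ω.1)) =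
        pairLaw K t ⊗ₘ G.prodMkRight (Traj d t) := by
  induction s, h using Nat.le_induction with
  | base =>
    refine ⟨Kernel.id, inferInstance, ?_⟩
    refine Measure.ext_of_lintegral _ fun f hf => ?_
    rw [lintegral_map hf ((measurable_restr_pair _).prodMk measurable_fst),
      Measure.lintegral_compProd hf]
    refine lintegral_congr fun p => ?_
    rw [Kernel.prodMkRight_apply, Kernel.id_apply,
      lintegral_dirac' _ (hf.fun_comp measurable_prodMk_left)]
    rfl
  | succ s h ih =>
    obtain ⟨G, _, hG⟩ := ih
    have hs := measurable_snocPath d s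
    refine ⟨(G ⊗ₖ (κ s).prodMkLeft (Traj d t)).map (snocPath d s),
      Kernel.IsMarkovKernel.map _ hs, ?_⟩
    refine Measure.ext_of_lintegral _ fun f hf => ?_
    have hg : Measurable fun q : (((Traj d t × Traj d t) × Traj d s) × (Fin d → ℝ)) =>
        f (q.1.1, snocPath d s (q.1.2, q.2)) :=
      hf.fun_comp ((by fun_prop : Measurable fun q : (((Traj d t × Traj d t) × Traj d s) ×
        (Fin d → ℝ)) => q.1.1).prodMk (hs.comp (by fun_prop)))
    have hg' : Measurable fun q : (Traj d t × Traj d t) × Traj d s =>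
        ∫⁻ a, f (q.1, snocPath d s (q.2, a)) ∂(κ s q.2) :=
      hg.lintegral_kernel_prod_right' (κ := (κ s).prodMkLeft (Traj d t × Traj d t))
    have hm {r : ℕ} (h : t ≤ r) :
        Measurable fun ω : Traj d r × Traj d r => ((restr d h ω.1, restr d h ω.2), ω.1) :=
      (measurable_restr_pair h).prodMk measurable_fst
    calc ∫⁻ q, f q ∂(pairLaw K (s + 1)).map
          (fun ω => ((restr d (Nat.le_succ_of_le h) ω.1, restr d (Nat.le_succ_of_le h) ω.2), ω.1))
        = ∫⁻ p, ∫⁻ a, f ((restr d h p.1, restr d h p.2), snocPath d s (p.1, a))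
            ∂(κ s p.1) ∂(pairLaw K s) := by
          rw [lintegral_map hf (hm _), lintegral_pairLaw_succ _ _ (hf.fun_comp (hm _))]
          refine lintegral_congr fun p => ?_
          rw [← hK, lintegral_map
            (hf.fun_comp (measurable_const.prodMk (hs.fun_comp measurable_prodMk_left)))
            measurable_fst]
          simp only [snocPair, restr_snocPath h]
      _ = ∫⁻ q, ∫⁻ a, f (q.1, snocPath d s (q.2, a)) ∂(κ s q.2)
            ∂(pairLaw K t ⊗ₘ G.prodMkRight (Traj d t)) := by
          rw [← hG, lintegral_map hg' (hm h)]
      _ = _ := by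
          have := Kernel.IsMarkovKernel.map (G ⊗ₖ (κ s).prodMkLeft (Traj d t)) hs
          rw [Measure.lintegral_compProd hg', Measure.lintegral_compProd hf]
          refine lintegral_congr fun p => ?_
          have hfp : Measurable fun y => f (p, y) := hf.fun_comp measurable_prodMk_left
          rw [Kernel.prodMkRight_apply, Kernel.prodMkRight_apply, Kernel.map_apply _ hs,
            lintegral_map hfp hs, Kernel.lintegral_compProd _ _ _ (hfp.fun_comp hs)]
          rfl

lemma condIndepFun_fst_pairLaw (hK : ∀ t p, (K t p).map Prod.fst = κ t p.1) {t T : ℕ}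
    (h : t ≤ T) :
    (fun ω => restr d h ω.2) ⟂ᵢ[fun ω => restr d h ω.1,
      measurable_restr_fst h; pairLaw K T] (fun ω => restr d (le_refl T) ω.1) := by
  obtain ⟨G, _, hG⟩ := exists_kernel_pairLaw hK h
  refine condIndepFun_of_map_eq_compProd (measurable_restr_fst h) (measurable_restr_snd h)
    (measurable_restr_fst le_rfl) (κ := G) ?_
  rw [← map_restr_pairLaw K h] at hG
  exact hG

lemma map_snd_pairLaw (hK : ∀ t p, (K t p).map Prod.snd = κ t p.2) (t : ℕ) :
    (pairLaw K t).map Prod.snd = iterComp d (fun t x => κ t x) t := by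
  rw [← map_fst_pairLaw (map_fst_swap_kernel hK), ← pairLaw_swap,
    Measure.map_map measurable_fst measurable_swap]
  rfl

lemma condIndepFun_snd_pairLaw (hK : ∀ t p, (K t p).map Prod.snd = κ t p.2) {t T : ℕ}
    (h : t ≤ T) :
    (fun ω => restr d h ω.1) ⟂ᵢ[fun ω => restr d h ω.2,
      measurable_restr_snd h; pairLaw K T] (fun ω => restr d (le_refl T) ω.2) := by
  obtain ⟨G, _, hG⟩ := exists_kernel_pairLaw (map_fst_swap_kernel hK) h
  refine condIndepFun_of_map_eq_compProd (measurable_restr_snd h) (measurable_restr_fst h)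
    (measurable_restr_snd le_rfl) (κ := G) ?_
  rw [← map_restr_pairLaw _ h, ← pairLaw_swap, Measure.map_map (measurable_restr_pair h)
    measurable_swap, Measure.map_map ((measurable_restr_pair h).prodMk measurable_fst)
    measurable_swap] at hG
  exact hG

lemma isBicausal_pairLaw {η : ∀ t, Kernel (Traj d t) (Fin d → ℝ)} [∀ t, IsMarkovKernel (η t)]
    (hκ : ∀ t p, (K t p).map Prod.fst = κ t p.1) (hη : ∀ t p, (K t p).map Prod.snd = η t p.2)
    (T : ℕ) : IsBicausal d T (pairLaw K T) := fun _ _ h =>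
  ⟨condIndepFun_fst_pairLaw hκ (Nat.le_of_succ_le h),
    condIndepFun_snd_pairLaw hη (Nat.le_of_succ_le h)⟩

/-- If the joint transition kernels charge the diagonal at least as `m`, the law of the pair
charges the diagonal at least as the composition of `m`. -/
lemma lintegral_iterComp_le_pairLaw {m : ∀ t, Kernel (Traj d t) (Fin d → ℝ)}
    [∀ t, IsFiniteKernel (m t)] (hm : ∀ t x, (m t x).map (fun a => (a, a)) ≤ K t (x, x))
    (t : ℕ) {f : Traj d t → ℝ≥0∞} (hf : Measurable f) :
    ∫⁻ x, f x ∂(iterComp d (fun t x => m t x) t) ≤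
      ∫⁻ q in {q : Traj d t × Traj d t | q.1 = q.2}, f q.1 ∂(pairLaw K t) := by
  have hD (t : ℕ) : MeasurableSet {q : Traj d t × Traj d t | q.1 = q.2} :=
    measurableSet_eq_fun measurable_fst measurable_snd
  induction t with
  | zero =>
    have huniv : {q : Traj d 0 × Traj d 0 | q.1 = q.2} = Set.univ :=
      Set.eq_univ_of_forall fun q => Subsingleton.elim _ _
    have := Measure.isProbabilityMeasure_map (μ := pairLaw K 0) measurable_fst.aemeasurable
    rw [huniv, Measure.restrict_univ, ← lintegral_map hf measurable_fst,
      eq_iterComp_zero _ ((pairLaw K 0).map Prod.fst)]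
  | succ t ih =>
    have hs := measurable_snocPath d t
    have hg : Measurable fun p : Traj d t × (Fin d → ℝ) => f (snocPath d t p) := hf.comp hs
    have hF : Measurable fun q : Traj d (t + 1) × Traj d (t + 1) =>
        {q : Traj d (t + 1) × Traj d (t + 1) | q.1 = q.2}.indicator (fun q => f q.1) q :=
      Measurable.indicator (hf.comp measurable_fst) (hD _)
    rw [iterComp_succ, lintegral_map hf hs, Measure.lintegral_compProd hg,
      ← lintegral_indicator (hD _), lintegral_pairLaw_succ _ _ hF]
    refine (ih hg.lintegral_kernel_prod_right').trans ?_
    rw [← lintegral_indicator (hD _)]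
    refine lintegral_mono fun p => ?_
    obtain ⟨x, y⟩ := p
    by_cases hxy : x = y
    · subst hxy
      rw [Set.indicator_of_mem (by simp)]
      calc ∫⁻ a, f (snocPath d t (x, a)) ∂(m t x)
          = ∫⁻ a, {q : Traj d (t + 1) × Traj d (t + 1) | q.1 = q.2}.indicator (fun q => f q.1)
              (snocPair d t ((x, x), a)) ∂(m t x).map (fun a => (a, a)) := by
            rw [lintegral_map
              (hF.fun_comp ((measurable_snocPair d t).fun_comp measurable_prodMk_left)) (by fun_prop)]
            simp [snocPair]
        _ ≤ _ := lintegral_mono' (hm t x) le_rfl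
    · rw [Set.indicator_of_notMem (by simpa using hxy)]
      exact zero_le

/-- Two laws with conditional kernels `κ` and `η` have a bicausal coupling which charges the
diagonal at least as the composition of any common lower bound `m` of the kernels. -/
lemma exists_bicausal_coupling {T : ℕ} {μ ν : Measure (Traj d T)} [IsProbabilityMeasure μ]
    [IsProbabilityMeasure ν] {κ η m : ∀ t, Kernel (Traj d t) (Fin d → ℝ)}
    [∀ t, IsMarkovKernel (κ t)] [∀ t, IsMarkovKernel (η t)] [∀ t, IsFiniteKernel (m t)]
    (hmκ : ∀ t x, m t x ≤ κ t x) (hmη : ∀ t x, m t x ≤ η t x)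
    (hκ : ∀ t, ∀ h : t + 1 ≤ T, μ.map (restr d h) =
      (μ.map (restr d (Nat.le_of_succ_le h))).bind (fun x => (κ t x).map (Fin.snoc x)))
    (hη : ∀ t, ∀ h : t + 1 ≤ T, ν.map (restr d h) =
      (ν.map (restr d (Nat.le_of_succ_le h))).bind (fun x => (η t x).map (Fin.snoc x))) :
    ∃ π ∈ BCpl μ ν, ∀ f : Traj d T → ℝ≥0∞, Measurable f →
      ∫⁻ x, f x ∂(iterComp d (fun t x => m t x) T) ≤
        ∫⁻ q in {q : Traj d T × Traj d T | q.1 = q.2}, f q.1 ∂π := by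
  have hex (t : ℕ) : ∃ K : Kernel (Traj d t × Traj d t) ((Fin d → ℝ) × (Fin d → ℝ)),
      IsMarkovKernel K ∧ (∀ p, (K p).map Prod.fst = κ t p.1) ∧
      (∀ p, (K p).map Prod.snd = η t p.2) ∧ ∀ x, (m t x).map (fun a => (a, a)) ≤ K (x, x) :=
    exists_diagonal_coupling (hmκ t) (hmη t)
  choose K hKp hK1 hK2 hKm using hex
  refine ⟨pairLaw K T, ⟨⟨inferInstance, ?_, ?_⟩, inferInstance, ?_⟩, fun f hf =>
    lintegral_iterComp_le_pairLaw hKm T hf⟩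
  · rw [map_fst_pairLaw hK1, ← map_restr_eq_iterComp hκ T le_rfl]
    exact Measure.map_id
  · rw [map_snd_pairLaw hK2, ← map_restr_eq_iterComp hη T le_rfl]
    exact Measure.map_id
  · exact isBicausal_pairLaw hK1 hK2 T

end Coupling

/-- Representation of the weighted adapted total variation: with `η` the
time-step-wise composition of the lattice infima of the conditional kernels of `μ` and `ν`,
the supremum over bicausal couplings of `∫ 2 w(x) 1_{x=y} dπ` equals `2 ∫ w dη` and
`ATV_w(μ,ν) = ∫ w dμ + ∫ w dν - 2 ∫ w dη`. -/
theorem atv_w_representation (d T : ℕ) (hd : 1 ≤ d) (hT : 1 ≤ T)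
    (μ ν : Measure (Traj d T)) [IsProbabilityMeasure μ] [IsProbabilityMeasure ν]
    (w : Traj d T → ℝ) (hwm : Measurable w) (hw0 : ∀ x, 0 ≤ w x)
    (hwint : (∫⁻ x, ENNReal.ofReal (w x) ∂μ) + (∫⁻ x, ENNReal.ofReal (w x) ∂ν) < ⊤)
    -- disintegrations (families of conditional kernels) of `μ` and `ν`
    (κμ κν : ∀ t : ℕ, Traj d t → Measure (Fin d → ℝ))
    (hκμm : ∀ t, Measurable (κμ t)) (hκνm : ∀ t, Measurable (κν t))
    (hκμp : ∀ t x, IsProbabilityMeasure (κμ t x)) (hκνp : ∀ t x, IsProbabilityMeasure (κν t x))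
    (hκμdis : ∀ t, ∀ h : t + 1 ≤ T,
      μ.map (restr d h) =
        (μ.map (restr d (Nat.le_of_succ_le h))).bind (fun x => (κμ t x).map (Fin.snoc x)))
    (hκνdis : ∀ t, ∀ h : t + 1 ≤ T,
      ν.map (restr d h) =
        (ν.map (restr d (Nat.le_of_succ_le h))).bind (fun x => (κν t x).map (Fin.snoc x)))
    -- the lattice infima of the kernels form measurable (sub-probability) kernels
    (hinfm : ∀ t, Measurable (fun x => κμ t x ⊓ κν t x)) :
    (⨆ π ∈ BCpl μ ν, ∫⁻ q in {q : Traj d T × Traj d T | q.1 = q.2},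
        2 * ENNReal.ofReal (w q.1) ∂π)
      = 2 * ∫⁻ x, ENNReal.ofReal (w x) ∂(iterComp d (fun t x => κμ t x ⊓ κν t x) T) ∧
    ATVw w μ ν =
      (∫⁻ x, ENNReal.ofReal (w x) ∂μ) + (∫⁻ x, ENNReal.ofReal (w x) ∂ν)
        - 2 * ∫⁻ x, ENNReal.ofReal (w x) ∂(iterComp d (fun t x => κμ t x ⊓ κν t x) T) := by
  let kμ : ∀ t, Kernel (Traj d t) (Fin d → ℝ) := fun t => ⟨κμ t, hκμm t⟩
  let kν : ∀ t, Kernel (Traj d t) (Fin d → ℝ) := fun t => ⟨κν t, hκνm t⟩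
  let m : ∀ t, Kernel (Traj d t) (Fin d → ℝ) := fun t => ⟨fun x => κμ t x ⊓ κν t x, hinfm t⟩
  have (t : ℕ) : IsMarkovKernel (kμ t) := ⟨hκμp t⟩
  have (t : ℕ) : IsMarkovKernel (kν t) := ⟨hκνp t⟩
  have hmμ (t : ℕ) (x : Traj d t) : m t x ≤ kμ t x := inf_le_left
  have hmν (t : ℕ) (x : Traj d t) : m t x ≤ kν t x := inf_le_right
  have (t : ℕ) : IsFiniteKernel (m t) :=
    ⟨1, ENNReal.one_lt_top, fun x => (hmμ t x Set.univ).trans prob_le_one⟩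
  set I := ∫⁻ x, ENNReal.ofReal (w x) ∂(iterComp d (fun t x => κμ t x ⊓ κν t x) T)
  set C := (∫⁻ x, ENNReal.ofReal (w x) ∂μ) + (∫⁻ x, ENNReal.ofReal (w x) ∂ν)
  have hW : Measurable fun x => ENNReal.ofReal (w x) := hwm.ennreal_ofReal
  have hD : MeasurableSet {q : Traj d T × Traj d T | q.1 = q.2} :=
    measurableSet_eq_fun measurable_fst measurable_snd
  have hle (π : Measure (Traj d T × Traj d T)) (hπ : π ∈ BCpl μ ν) :
      ∫⁻ q in {q : Traj d T × Traj d T | q.1 = q.2}, 2 * ENNReal.ofReal (w q.1) ∂π ≤ 2 * I := by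
    obtain ⟨⟨_, h1, h2⟩, _, hbc⟩ := hπ
    have hdiag := diagLaw_le_iterComp hbc (m := m) (κ := kμ) (η := kν) (fun _ _ => rfl)
      (by rw [h1]; exact hκμdis) (by rw [h2]; exact hκνdis) T le_rfl
    rw [lintegral_const_mul _ (hW.fun_comp measurable_fst)]
    gcongr
    rw [← lintegral_map hW measurable_fst]
    exact lintegral_mono' hdiag le_rfl
  have hsplit (π : Measure (Traj d T × Traj d T)) (hπ : π ∈ BCpl μ ν) :
      (∫⁻ q in {q : Traj d T × Traj d T | q.1 ≠ q.2},
        (ENNReal.ofReal (w q.1) + ENNReal.ofReal (w q.2)) ∂π) +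
      ∫⁻ q in {q : Traj d T × Traj d T | q.1 = q.2}, 2 * ENNReal.ofReal (w q.1) ∂π = C := by
    obtain ⟨⟨_, h1, h2⟩, -⟩ := hπ
    have hdiag : ∫⁻ q in {q : Traj d T × Traj d T | q.1 = q.2}, 2 * ENNReal.ofReal (w q.1) ∂π =
        ∫⁻ q in {q : Traj d T × Traj d T | q.1 = q.2},
          (ENNReal.ofReal (w q.1) + ENNReal.ofReal (w q.2)) ∂π := by
      refine setLIntegral_congr_fun hD fun q hq => ?_
      simp only [Set.mem_ofPred_eq] at hq
      simp only [← hq, two_mul]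
    rw [hdiag, add_comm]
    refine (lintegral_add_compl _ hD).trans ?_
    rw [lintegral_add_left (hW.fun_comp measurable_fst), ← lintegral_map hW measurable_fst,
      ← lintegral_map hW measurable_snd, h1, h2]
  obtain ⟨π₀, hmem, hge⟩ := exists_bicausal_coupling hmμ hmν hκμdis hκνdis
  have heq : ∫⁻ q in {q : Traj d T × Traj d T | q.1 = q.2},
      2 * ENNReal.ofReal (w q.1) ∂π₀ = 2 * I := by
    refine le_antisymm (hle _ hmem) ?_
    rw [lintegral_const_mul _ (hW.fun_comp measurable_fst)]
    gcongr
    exact hge _ hW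
  have hItop : 2 * I ≠ ⊤ := by
    refine ne_top_of_le_ne_top hwint.ne ?_
    rw [← heq, ← hsplit _ hmem]
    exact le_add_self
  refine ⟨le_antisymm (iSup₂_le hle) (heq.ge.trans (le_iSup₂_of_le _ hmem le_rfl)), ?_⟩
  refine le_antisymm (iInf₂_le_of_le _ hmem ?_) (le_iInf₂ fun π hπ => ?_)
  · exact ENNReal.le_sub_of_add_le_right hItop (by rw [← heq, hsplit _ hmem])
  · rw [tsub_le_iff_right, ← hsplit π hπ]
    gcongr
    exact hle π hπ

end
end

section
/- Let a, b, c, l, λ, κ ∈ [0, ∞) with b > 0, a ≤ min(1, b) and λ ≥ κ. Consider the infimum of ∫ H(u, y) dρ(u, y) over all Borel probability measures ρ on [0, ∞) × [0, ∞) satisfying ∫ y dρ(u, y) = 1 and ∫ u dρ(u, y) ≤ c·l. This infimum equals l · (|1 − b|(λ − κ) + 2κ(b + c)(a − 1)) if b ≤ 1, and equals l · (|1 − b|(λ − κ) + 2κ(1 + c)(a/b − 1)) if b ≥ 1. -/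
open MeasureTheory
open scoped ENNReal

noncomputable section

/-- The integrand `H(u,y) = (l+u)((λ-κ)|1-by| + 2κ(a min(1,y) - min(1,by)))`. -/
def Hfun (l lam kap a b : ℝ) (u y : ℝ) : ℝ :=
  (l + u) * ((lam - kap) * |1 - b * y| + 2 * kap * (a * min 1 y - min 1 (b * y)))

/-- The integral `∫ H dρ`, well-defined with values in `(-∞, ∞]` as the difference of the
integrals of the positive and negative parts. -/
def intH (l lam kap a b : ℝ) (ρ : Measure (ℝ × ℝ)) : EReal :=
  ((∫⁻ q, ENNReal.ofReal (Hfun l lam kap a b q.1 q.2) ∂ρ : ℝ≥0∞) : EReal)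
    - ((∫⁻ q, ENNReal.ofReal (-(Hfun l lam kap a b q.1 q.2)) ∂ρ : ℝ≥0∞) : EReal)

/-- The admissible distributions `ρ` of the pair `(ΔW, Y)` of nonnegative random variables with
`E[Y] = 1` and `E[ΔW] ≤ c l`. -/
def Adm (c l : ℝ) : Set (Measure (ℝ × ℝ)) :=
  {ρ | IsProbabilityMeasure ρ ∧ (∀ᵐ q ∂ρ, 0 ≤ q.1 ∧ 0 ≤ q.2) ∧
    (∫⁻ q, ENNReal.ofReal q.2 ∂ρ) = 1 ∧ (∫⁻ q, ENNReal.ofReal q.1 ∂ρ) ≤ ENNReal.ofReal (c * l)}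

lemma measurable_Hfun (l lam kap a b : ℝ) :
    Measurable fun q : ℝ × ℝ => Hfun l lam kap a b q.1 q.2 := by
  unfold Hfun
  fun_prop

lemma intH_eq_integral {l lam kap a b : ℝ} {ρ : Measure (ℝ × ℝ)}
    (h : Integrable (fun q : ℝ × ℝ => Hfun l lam kap a b q.1 q.2) ρ) :
    intH l lam kap a b ρ = ((∫ q, Hfun l lam kap a b q.1 q.2 ∂ρ : ℝ) : EReal) := by
  have hpos : ∫⁻ q, ENNReal.ofReal (Hfun l lam kap a b q.1 q.2) ∂ρ ≠ ⊤ := h.lintegral_lt_top.ne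
  have hneg : ∫⁻ q, ENNReal.ofReal (-(Hfun l lam kap a b q.1 q.2)) ∂ρ ≠ ⊤ :=
    h.neg.lintegral_lt_top.ne
  rw [integral_eq_lintegral_pos_part_sub_lintegral_neg_part h, intH, EReal.coe_sub,
    EReal.coe_ennreal_toReal hpos, EReal.coe_ennreal_toReal hneg]

/-- An integrable minorant of `H` bounds `intH` from below, even if `H` is not integrable. -/
lemma integral_le_intH {l lam kap a b : ℝ} {ρ : Measure (ℝ × ℝ)} {L : ℝ × ℝ → ℝ}
    (hL : Integrable L ρ) (hLH : ∀ᵐ q ∂ρ, L q ≤ Hfun l lam kap a b q.1 q.2) :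
    ((∫ q, L q ∂ρ : ℝ) : EReal) ≤ intH l lam kap a b ρ := by
  have hneg : ∫⁻ q, ENNReal.ofReal (-(Hfun l lam kap a b q.1 q.2)) ∂ρ ≠ ⊤ := by
    refine ne_top_of_le_ne_top hL.neg.lintegral_lt_top.ne (lintegral_mono_ae ?_)
    filter_upwards [hLH] with q hq
    exact ENNReal.ofReal_le_ofReal (neg_le_neg hq)
  by_cases hpos : ∫⁻ q, ENNReal.ofReal (Hfun l lam kap a b q.1 q.2) ∂ρ = ⊤
  · rw [intH, hpos, ← EReal.coe_ennreal_toReal hneg]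
    simp
  · have hH : Integrable (fun q : ℝ × ℝ => Hfun l lam kap a b q.1 q.2) ρ := by
      have hm := measurable_Hfun l lam kap a b
      have h₁ := integrable_toReal_of_lintegral_ne_top
        (hm.ennreal_ofReal.aemeasurable (μ := ρ)) hpos
      have h₂ := integrable_toReal_of_lintegral_ne_top
        (hm.neg.ennreal_ofReal.aemeasurable (μ := ρ)) hneg
      refine (h₁.sub h₂).congr (ae_of_all _ fun q => ?_)
      simp only [Pi.sub_apply, Pi.neg_apply, ENNReal.toReal_ofReal']
      rw [max_zero_sub_eq_self]
    rw [intH_eq_integral hH]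
    exact_mod_cast integral_mono_ae hL hH hLH

/-- Affine minorants of the `y`-factor of `H` give a lower bound for `intH`. -/
lemma le_intH_of_affine_minorant {l lam kap a b c α β γ : ℝ} (hc : 0 ≤ c) (hl : 0 ≤ l)
    (hγ : γ ≤ 0)
    (hβ : ∀ y, 0 ≤ y →
      α + β * y ≤ (lam - kap) * |1 - b * y| + 2 * kap * (a * min 1 y - min 1 (b * y)))
    (hγ' : ∀ y, 0 ≤ y →
      γ ≤ (lam - kap) * |1 - b * y| + 2 * kap * (a * min 1 y - min 1 (b * y)))
    {ρ : Measure (ℝ × ℝ)} (hρ : ρ ∈ Adm c l) :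
    ((l * (α + β + γ * c) : ℝ) : EReal) ≤ intH l lam kap a b ρ := by
  obtain ⟨hprob, hnn, hy, hu⟩ := hρ
  have hu0 : 0 ≤ᵐ[ρ] fun q : ℝ × ℝ => q.1 := hnn.mono fun q hq => hq.1
  have hy0 : 0 ≤ᵐ[ρ] fun q : ℝ × ℝ => q.2 := hnn.mono fun q hq => hq.2
  have hum : AEStronglyMeasurable (fun q : ℝ × ℝ => q.1) ρ :=
    measurable_fst.aestronglyMeasurable
  have hym : AEStronglyMeasurable (fun q : ℝ × ℝ => q.2) ρ :=
    measurable_snd.aestronglyMeasurable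
  have hui : Integrable (fun q : ℝ × ℝ => q.1) ρ :=
    (lintegral_ofReal_ne_top_iff_integrable hum hu0).1
      (ne_top_of_le_ne_top ENNReal.ofReal_ne_top hu)
  have hyi : Integrable (fun q : ℝ × ℝ => q.2) ρ :=
    (lintegral_ofReal_ne_top_iff_integrable hym hy0).1 (by simp [hy])
  have hyint : ∫ q, q.2 ∂ρ = 1 := by
    rw [integral_eq_lintegral_of_nonneg_ae hy0 hym, hy, ENNReal.toReal_one]
  have huint : ∫ q, q.1 ∂ρ ≤ c * l := by
    rw [integral_eq_lintegral_of_nonneg_ae hu0 hum]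
    exact ENNReal.toReal_le_of_le_ofReal (mul_nonneg hc hl) hu
  have hαi : Integrable (fun q : ℝ × ℝ => α + β * q.2) ρ :=
    (integrable_const α).add (hyi.const_mul β)
  have hLi : Integrable (fun q : ℝ × ℝ => l * (α + β * q.2) + γ * q.1) ρ :=
    (hαi.const_mul l).add (hui.const_mul γ)
  have hLint : ∫ q, (l * (α + β * q.2) + γ * q.1) ∂ρ = l * (α + β) + γ * ∫ q, q.1 ∂ρ := by
    rw [integral_add (hαi.const_mul l) (hui.const_mul γ), integral_const_mul,
      integral_const_mul, integral_add (integrable_const α) (hyi.const_mul β),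
      integral_const_mul, hyint]
    simp
  refine le_trans ?_ (integral_le_intH hLi ?_)
  · rw [hLint, EReal.coe_le_coe_iff]
    nlinarith [mul_le_mul_of_nonpos_left huint hγ]
  · filter_upwards [hnn] with q hq
    unfold Hfun
    nlinarith [mul_le_mul_of_nonneg_left (hβ q.2 hq.2) hl,
      mul_le_mul_of_nonneg_left (hγ' q.2 hq.2) hq.1]

/-- Upper bound from the law charging `(c l / p, 1 / b)` with mass `p` and `(0, y)` with mass
`r`. -/
lemma iInf_intH_le_two_point {l lam kap a b c p r y : ℝ} (hb : 0 < b) (hc : 0 ≤ c) (hl : 0 ≤ l)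
    (hp : 0 < p) (hr : 0 ≤ r) (hpr : p + r = 1) (hy : 0 ≤ y) (hmean : p / b + r * y = 1) :
    (⨅ ρ ∈ Adm c l, intH l lam kap a b ρ) ≤
      ((p * Hfun l lam kap a b (c * l / p) (1 / b) + r * Hfun l lam kap a b 0 y : ℝ) : EReal) := by
  set ρ : Measure (ℝ × ℝ) := ENNReal.ofReal p • Measure.dirac (c * l / p, 1 / b) +
    ENNReal.ofReal r • Measure.dirac (0, y) with hρ
  have hcl : 0 ≤ c * l := mul_nonneg hc hl
  have hmem : ρ ∈ Adm c l := by
    refine ⟨⟨?_⟩, ?_, ?_, ?_⟩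
    · simp [hρ, ← ENNReal.ofReal_add hp.le hr, hpr]
    · rw [hρ, ae_add_measure_iff]
      refine ⟨Measure.ae_smul_measure ?_ _, Measure.ae_smul_measure ?_ _⟩
      · rw [ae_dirac_eq]
        exact ⟨by positivity, by positivity⟩
      · rw [ae_dirac_eq]
        exact ⟨le_rfl, hy⟩
    · rw [hρ, lintegral_add_measure, lintegral_smul_measure, lintegral_smul_measure,
        lintegral_dirac, lintegral_dirac, smul_eq_mul, smul_eq_mul, ← ENNReal.ofReal_mul hp.le,
        ← ENNReal.ofReal_mul hr, ← ENNReal.ofReal_add (by positivity) (by positivity),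
        mul_one_div, hmean, ENNReal.ofReal_one]
    · rw [hρ, lintegral_add_measure, lintegral_smul_measure, lintegral_smul_measure,
        lintegral_dirac, lintegral_dirac, smul_eq_mul, smul_eq_mul, ← ENNReal.ofReal_mul hp.le,
        mul_div_cancel₀ _ hp.ne']
      simp
  have hi (s : ℝ) (x : ℝ × ℝ) : Integrable (fun q : ℝ × ℝ => Hfun l lam kap a b q.1 q.2)
      (ENNReal.ofReal s • Measure.dirac x) :=
    (integrable_dirac (by simp)).smul_measure ENNReal.ofReal_ne_top
  refine (iInf₂_le ρ hmem).trans ?_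
  rw [intH_eq_integral ((hi _ _).add_measure (hi _ _)), integral_add_measure (hi _ _) (hi _ _),
    integral_smul_measure, integral_smul_measure, integral_dirac, integral_dirac,
    ENNReal.toReal_ofReal hp.le, ENNReal.toReal_ofReal hr, smul_eq_mul, smul_eq_mul]

lemma iInf_intH_of_le_one {a b c l lam kap : ℝ} (ha : 0 ≤ a) (hb : 0 < b) (hc : 0 ≤ c)
    (hl : 0 ≤ l) (hkap : 0 ≤ kap) (hab : a ≤ b) (hlk : kap ≤ lam) (hb1 : b ≤ 1) :
    (⨅ ρ ∈ Adm c l, intH l lam kap a b ρ) =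
      ((l * (|1 - b| * (lam - kap) + 2 * kap * (b + c) * (a - 1)) : ℝ) : EReal) := by
  have hμ : 0 ≤ lam - kap := sub_nonneg.2 hlk
  have hbb : b * (1 / b) = 1 := mul_one_div_cancel hb.ne'
  have h1b : (1 : ℝ) ≤ 1 / b := by rwa [le_div_iff₀ hb, one_mul]
  rw [abs_of_nonneg (sub_nonneg.2 hb1)]
  apply le_antisymm
  · refine (iInf_intH_le_two_point (p := b) (r := 1 - b) (y := 0) hb hc hl hb (by linarith)
      (by ring) le_rfl (by simp [hb.ne'])).trans (EReal.coe_le_coe_iff.2 (le_of_eq ?_))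
    unfold Hfun
    rw [hbb, min_eq_left h1b]
    simp
    field_simp
    ring
  · refine le_iInf₂ fun ρ hρ => ?_
    have key := le_intH_of_affine_minorant (α := lam - kap)
      (β := -(lam - kap) * b + 2 * kap * (b * (a - 1))) (γ := 2 * kap * (a - 1))
      (lam := lam) (kap := kap) (a := a) (b := b) hc hl
      (mul_nonpos_of_nonneg_of_nonpos (by positivity) (by linarith)) ?_ ?_ hρ
    · convert key using 2
      ring
    · intro y hy
      have h₁ := mul_le_mul_of_nonneg_left (le_abs_self (1 - b * y)) hμ
      have h₂ : b * (a - 1) * y ≤ a * min 1 y - min 1 (b * y) := by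
        have hby : b * y ≤ y := by nlinarith
        rcases le_total 1 y with h | h <;> rcases le_total 1 (b * y) with h' | h' <;>
          simp only [min_eq_left h, min_eq_right h, min_eq_left h', min_eq_right h'] <;>
          nlinarith [mul_nonneg ha hy]
      nlinarith [mul_le_mul_of_nonneg_left h₂ hkap]
    · intro y hy
      have h₁ := mul_nonneg hμ (abs_nonneg (1 - b * y))
      have h₂ : a - 1 ≤ a * min 1 y - min 1 (b * y) := by
        rcases le_total 1 y with h | h
        · rw [min_eq_left h]
          linarith [min_le_left 1 (b * y)]
        · rw [min_eq_right h]
          nlinarith [min_le_right 1 (b * y)]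
      nlinarith [mul_le_mul_of_nonneg_left h₂ hkap]

lemma iInf_intH_of_one_lt {a b c l lam kap : ℝ} (ha : 0 ≤ a) (hc : 0 ≤ c)
    (hl : 0 ≤ l) (hkap : 0 ≤ kap) (ha1 : a ≤ 1) (hlk : kap ≤ lam) (hb1 : 1 < b) :
    (⨅ ρ ∈ Adm c l, intH l lam kap a b ρ) =
      ((l * (|1 - b| * (lam - kap) + 2 * kap * (1 + c) * (a / b - 1)) : ℝ) : EReal) := by
  have hb : 0 < b := by linarith
  have hμ : 0 ≤ lam - kap := sub_nonneg.2 hlk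
  have hbb : b * (1 / b) = 1 := mul_one_div_cancel hb.ne'
  have h1b : 1 / b ≤ (1 : ℝ) := by rw [div_le_iff₀ hb]; linarith
  have habs : |1 - b| = b - 1 := by rw [abs_of_neg (by linarith)]; ring
  rw [habs]
  apply le_antisymm
  · have hε : ∀ ε : ℝ, 0 < ε → ε < 1 → (⨅ ρ ∈ Adm c l, intH l lam kap a b ρ) ≤
        ((l * ((b - 1) * (lam - kap) + 2 * kap * (1 + c) * (a / b - 1)) +
          ε * (2 * kap * l * (a - a / b)) : ℝ) : EReal) := by
      intro ε h0 h1
      have hp : 0 < 1 - ε := by linarith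
      have hy1 : 1 ≤ (1 - (1 - ε) / b) / ε := by
        rw [le_div_iff₀ h0, div_eq_mul_one_div]
        nlinarith
      obtain ⟨y, hy⟩ : ∃ y, y = (1 - (1 - ε) / b) / ε := ⟨_, rfl⟩
      rw [← hy] at hy1
      have hmean : (1 - ε) / b + ε * y = 1 := by
        rw [hy]
        field_simp
        ring
      have hby : 1 ≤ b * y := by nlinarith
      have hεy : ε * (b * y) = b - (1 - ε) := by
        field_simp at hmean
        linarith
      refine (iInf_intH_le_two_point hb hc hl hp h0.le (by ring) (by linarith) hmean).trans
        (EReal.coe_le_coe_iff.2 (le_of_eq ?_))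
      unfold Hfun
      rw [hbb, min_eq_right h1b, min_self, min_eq_left hy1, min_eq_left hby, sub_self, abs_zero,
        abs_of_nonpos (by linarith : 1 - b * y ≤ 0)]
      have hpu : (1 - ε) * (l + c * l / (1 - ε)) = (1 - ε) * l + c * l := by
        rw [mul_add, mul_div_cancel₀ _ hp.ne']
      rw [← mul_assoc (1 - ε), hpu]
      linear_combination l * (lam - kap) * hεy
    have hcont : Continuous fun ε : ℝ =>
        ((l * ((b - 1) * (lam - kap) + 2 * kap * (1 + c) * (a / b - 1)) +
          ε * (2 * kap * l * (a - a / b)) : ℝ) : EReal) :=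
      continuous_coe_real_ereal.comp (by fun_prop)
    have hlim := (hcont.tendsto 0).mono_left (nhdsWithin_le_nhds (s := Set.Ioi 0))
    rw [zero_mul, add_zero] at hlim
    refine ge_of_tendsto hlim ?_
    filter_upwards [Ioo_mem_nhdsGT (zero_lt_one' ℝ)] with ε h
    exact hε ε h.1 h.2
  · refine le_iInf₂ fun ρ hρ => ?_
    have hab : a / b ≤ 1 := by rw [div_le_iff₀ hb]; linarith
    have hbab : b * (a / b) = a := mul_div_cancel₀ a hb.ne'
    have hab0 : 0 ≤ a / b := by positivity
    have h₂ : ∀ y, 0 ≤ y → a / b - 1 ≤ a * min 1 y - min 1 (b * y) := by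
      intro y hy
      obtain ⟨t, ht⟩ : ∃ t, t = a / b := ⟨_, rfl⟩
      rw [← ht] at hab hbab hab0 ⊢
      rcases le_total 1 y with h | h <;> rcases le_total 1 (b * y) with h' | h' <;>
          simp only [min_eq_left h, min_eq_right h, min_eq_left h', min_eq_right h'] <;>
          subst hbab <;> nlinarith
    have key := le_intH_of_affine_minorant (α := -(lam - kap) + 2 * kap * (a / b - 1))
      (β := (lam - kap) * b) (γ := 2 * kap * (a / b - 1))
      (lam := lam) (kap := kap) (a := a) (b := b) hc hl
      (mul_nonpos_of_nonneg_of_nonpos (by positivity) (by linarith)) ?_ ?_ hρ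
    · convert key using 2
      ring
    · intro y hy
      have h₁ := mul_le_mul_of_nonneg_left (neg_le_abs (1 - b * y)) hμ
      nlinarith [mul_le_mul_of_nonneg_left (h₂ y hy) hkap]
    · intro y hy
      have h₁ := mul_nonneg hμ (abs_nonneg (1 - b * y))
      nlinarith [mul_le_mul_of_nonneg_left (h₂ y hy) hkap]

/-- The value of the auxiliary minimization problem: for `b > 0`,
`a ≤ min(1,b)`, `λ ≥ κ`, the infimum of `∫ H dρ` over admissible `ρ` equals
`l(|1-b|(λ-κ) + 2κ(b+c)(a-1))` if `b ≤ 1`, and `l(|1-b|(λ-κ) + 2κ(1+c)(a/b-1))` if `b ≥ 1`. -/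
theorem intH_min (a b c l lam kap : ℝ)
    (ha0 : 0 ≤ a) (hb0 : 0 < b) (hc0 : 0 ≤ c) (hl0 : 0 ≤ l) (hlam0 : 0 ≤ lam) (hkap0 : 0 ≤ kap)
    (hab : a ≤ min 1 b) (hlk : kap ≤ lam) :
    (⨅ ρ ∈ Adm c l, intH l lam kap a b ρ) =
      ((l * (|1 - b| * (lam - kap) +
          (if b ≤ 1 then 2 * kap * (b + c) * (a - 1) else 2 * kap * (1 + c) * (a / b - 1))) : ℝ)
        : EReal) := by
  split_ifs with hb1
  · exact iInf_intH_of_le_one ha0 hb0 hc0 hl0 hkap0 (hab.trans (min_le_right _ _)) hlk hb1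
  · exact iInf_intH_of_one_lt ha0 hc0 hl0 hkap0 (hab.trans (min_le_left _ _)) hlk (not_le.1 hb1)

end
end

section
/- Let a, b, c, l, λ, κ ∈ [0, ∞) with a ≤ min(1, b) and λ ≥ κ. Then for every Borel probability measure ρ on [0, ∞) × [0, ∞) satisfying ∫ y dρ(u, y) = 1 and ∫ u dρ(u, y) ≤ c·l, one has ∫ H(u, y) dρ(u, y) ≥ l · (|1 − b|(λ − κ − 2κ(c + 1)) + 2κ(c + 1)(a − min(b, 1))). -/
open MeasureTheory
open scoped ENNReal

noncomputable section

/-- An integrable almost everywhere minorant of `h` bounds the difference of the integrals of the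
positive and negative parts of `h` from below. -/
theorem coe_integral_le_lintegral_sub_lintegral {α : Type*} [MeasurableSpace α] {μ : Measure α}
    {g h : α → ℝ} (hg : Integrable g μ) (hgh : ∀ᵐ x ∂μ, g x ≤ h x) :
    ((∫ x, g x ∂μ : ℝ) : EReal) ≤
      ((∫⁻ x, ENNReal.ofReal (h x) ∂μ : ℝ≥0∞) : EReal)
        - ((∫⁻ x, ENNReal.ofReal (-(h x)) ∂μ : ℝ≥0∞) : EReal) := by
  have hpos : ∫⁻ x, ENNReal.ofReal (g x) ∂μ ≠ ∞ := hg.lintegral_lt_top.ne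
  have hneg : ∫⁻ x, ENNReal.ofReal (-(g x)) ∂μ ≠ ∞ := hg.neg.lintegral_lt_top.ne
  rw [integral_eq_lintegral_pos_part_sub_lintegral_neg_part hg, EReal.coe_sub,
    EReal.coe_ennreal_toReal hpos, EReal.coe_ennreal_toReal hneg]
  refine EReal.sub_le_sub ?_ ?_
  · exact EReal.coe_ennreal_le_coe_ennreal_iff.2 <| lintegral_mono_ae <|
      hgh.mono fun x hx => ENNReal.ofReal_le_ofReal hx
  · exact EReal.coe_ennreal_le_coe_ennreal_iff.2 <| lintegral_mono_ae <|
      hgh.mono fun x hx => ENNReal.ofReal_le_ofReal (neg_le_neg hx)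

theorem sub_max_le_mul_min_sub_min {a b : ℝ} (hab : a ≤ min 1 b) (y : ℝ) :
    a - max 1 b ≤ a * min 1 y - min 1 (b * y) := by
  obtain ⟨ha1, hab⟩ := le_min_iff.1 hab
  rcases le_total 1 y with h | h
  · rw [min_eq_left h]
    linarith [min_le_left 1 (b * y), le_max_left 1 b]
  · rw [min_eq_right h]
    have h : (b - a) * y ≤ b - a := by nlinarith
    linarith [min_le_right 1 (b * y), le_max_right 1 b]

/-- A minorant of `Hfun`, affine in `(u, y)`; `s` is a subgradient of the absolute value. -/
theorem affine_le_Hfun {l lam kap a b s u : ℝ} (hl : 0 ≤ l) (hkap : 0 ≤ kap)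
    (hab : a ≤ min 1 b) (hlk : kap ≤ lam) (hs : |s| ≤ 1) (hu : 0 ≤ u) (y : ℝ) :
    l * (lam - kap) * s * (1 - b * y) + 2 * kap * (a - max 1 b) * (l + u)
      ≤ Hfun l lam kap a b u y := by
  have hsub : s * (1 - b * y) ≤ |1 - b * y| :=
    (le_abs_self _).trans (by rw [abs_mul]; exact mul_le_of_le_one_left (abs_nonneg _) hs)
  have hd : 0 ≤ lam - kap := sub_nonneg.2 hlk
  have h₁ : l * (lam - kap) * (s * (1 - b * y)) ≤ (l + u) * (lam - kap) * |1 - b * y| :=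
    (mul_le_mul_of_nonneg_left hsub (by positivity)).trans
      (mul_le_mul_of_nonneg_right (by nlinarith) (abs_nonneg _))
  have h₂ := mul_le_mul_of_nonneg_left (sub_max_le_mul_min_sub_min hab y)
    (show 0 ≤ 2 * kap * (l + u) by positivity)
  unfold Hfun
  linarith

/-- Lower bound for the auxiliary minimization problem: for every admissible
`ρ`, `∫ H dρ ≥ l(|1-b|(λ-κ-2κ(c+1)) + 2κ(c+1)(a - min(b,1)))`. -/
theorem intH_lower_bound (a b c l lam kap : ℝ)
    (ha0 : 0 ≤ a) (hb0 : 0 ≤ b) (hc0 : 0 ≤ c) (hl0 : 0 ≤ l) (hlam0 : 0 ≤ lam) (hkap0 : 0 ≤ kap)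
    (hab : a ≤ min 1 b) (hlk : kap ≤ lam)
    (ρ : Measure (ℝ × ℝ)) (hρ : ρ ∈ Adm c l) :
    ((l * (|1 - b| * (lam - kap - 2 * kap * (c + 1)) +
        2 * kap * (c + 1) * (a - min b 1)) : ℝ) : EReal) ≤ intH l lam kap a b ρ := by
  obtain ⟨hprob, hnonneg, hY, hW⟩ := hρ
  have hu : 0 ≤ᵐ[ρ] fun q : ℝ × ℝ => q.1 := hnonneg.mono fun _ hq => hq.1
  have hy : 0 ≤ᵐ[ρ] fun q : ℝ × ℝ => q.2 := hnonneg.mono fun _ hq => hq.2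
  have hui : Integrable (fun q : ℝ × ℝ => q.1) ρ :=
    (lintegral_ofReal_ne_top_iff_integrable measurable_fst.aestronglyMeasurable hu).1
      (hW.trans_lt ENNReal.ofReal_lt_top).ne
  have hyi : Integrable (fun q : ℝ × ℝ => q.2) ρ :=
    (lintegral_ofReal_ne_top_iff_integrable measurable_snd.aestronglyMeasurable hy).1
      (by simp [hY])
  have hEu : ∫ q, q.1 ∂ρ ≤ c * l := by
    rw [integral_eq_lintegral_of_nonneg_ae hu measurable_fst.aestronglyMeasurable]
    exact ENNReal.toReal_le_of_le_ofReal (by positivity) hW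
  have hEy : ∫ q, q.2 ∂ρ = 1 := by
    rw [integral_eq_lintegral_of_nonneg_ae hy measurable_snd.aestronglyMeasurable, hY,
      ENNReal.toReal_one]
  obtain ⟨s, hs, hsb⟩ : ∃ s : ℝ, |s| ≤ 1 ∧ s * (1 - b) = |1 - b| := by
    rcases le_total 0 (1 - b) with h | h
    · exact ⟨1, by simp, by rw [abs_of_nonneg h, one_mul]⟩
    · exact ⟨-1, by simp, by rw [abs_of_nonpos h, neg_one_mul]⟩
  have hi₁ : Integrable (fun q : ℝ × ℝ => l * (lam - kap) * s * (1 - b * q.2)) ρ :=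
    ((integrable_const 1).sub (hyi.const_mul b)).const_mul _
  have hi₂ : Integrable (fun q : ℝ × ℝ => 2 * kap * (a - max 1 b) * (l + q.1)) ρ :=
    ((integrable_const l).add hui).const_mul _
  refine le_trans (EReal.coe_le_coe_iff.2 ?_) (coe_integral_le_lintegral_sub_lintegral
    (hi₁.add hi₂) (hnonneg.mono fun q hq =>
      affine_le_Hfun hl0 hkap0 hab hlk hs hq.1 q.2))
  have hint : ∫ q, (l * (lam - kap) * s * (1 - b * q.2)
      + 2 * kap * (a - max 1 b) * (l + q.1)) ∂ρ
      = l * (lam - kap) * s * (1 - b) + 2 * kap * (a - max 1 b) * (l + ∫ q, q.1 ∂ρ) := by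
    rw [integral_add hi₁ hi₂, integral_const_mul, integral_const_mul,
      integral_sub (integrable_const 1) (hyi.const_mul b), integral_const_mul, hEy,
      integral_add (integrable_const l) hui]
    simp
  have hmax : max 1 b = min b 1 + |1 - b| := by
    rcases le_total 1 b with h | h
    · rw [max_eq_right h, min_eq_right h, abs_of_nonpos (by linarith)]; ring
    · rw [max_eq_left h, min_eq_left h, abs_of_nonneg (by linarith)]; ring
  have hneg : 2 * kap * (a - max 1 b) ≤ 0 :=
    mul_nonpos_of_nonneg_of_nonpos (by positivity)
      (by linarith [hab.trans (min_le_left 1 b), le_max_left 1 b])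
  have hmul := mul_le_mul_of_nonpos_left hEu hneg
  refine le_of_le_of_eq ?_ hint.symm
  rw [mul_assoc (l * (lam - kap)) s, hsb]
  rw [hmax] at hmul ⊢
  linarith

end
end

section
/- For every integer k ≥ 1 there exist a constant c > 0 and sequences (μ_n), (ν_n) of Borel probability measures on [0,1]² ⊆ ℝ² (i.e., d = 1, T = 2) whose Lebesgue densities f_n, g_n are k-times continuously differentiable with sup_n (‖f_n‖_{k,1} + ‖g_n‖_{k,1}) < ∞, such that 0 < W₁(μ_n, ν_n) for all n, W₁(μ_n, ν_n) → 0 as n → ∞, and AW₁(μ_n, ν_n) ≥ c · W₁(μ_n, ν_n)^{k/(k+1)} for every n. Hence the exponent k/(k+1) in the bound of the adapted Wasserstein distance AW₁ by W₁^{k/(k+1)} for measures with k-th order Sobolev densities cannot be improved. -/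
open MeasureTheory ProbabilityTheory
open scoped ENNReal

noncomputable section

/-- The degree `|α|` of a multi-index on the path space. -/
def mdegP {d T : ℕ} (α : Fin T × Fin d → ℕ) : ℕ := ∑ p, α p

/-- The (finite) set of multi-indices of degree at most `k`. -/
def mIdxP (d T k : ℕ) : Finset (Fin T × Fin d → ℕ) :=
  (Fintype.piFinset fun _ : Fin T × Fin d => Finset.range (k + 1)).filter fun α => mdegP α ≤ k

/-- Iterated partial derivative along a list of coordinate directions. -/
def iterPDerivP {d T : ℕ} : List (Fin T × Fin d) → (Traj d T → ℝ) → (Traj d T → ℝ)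
  | [], f => f
  | p :: ps, f => iterPDerivP ps fun x => fderiv ℝ f x (Pi.single p.1 (Pi.single p.2 1))

/-- The partial derivative `D^α f` associated with a multi-index `α`. -/
def mderivP {d T : ℕ} (α : Fin T × Fin d → ℕ) (f : Traj d T → ℝ) : Traj d T → ℝ :=
  iterPDerivP ((Finset.univ : Finset (Fin T × Fin d)).toList.flatMap
    fun p => List.replicate (α p) p) f

/-- The Sobolev norm `‖f‖_{k,1} = ∑_{|α| ≤ k} ‖D^α f‖_{L¹}` on the path space. -/
def sobNormP (d T k : ℕ) (f : Traj d T → ℝ) : ℝ :=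
  ∑ α ∈ mIdxP d T k, ∫ x, |mderivP α f x|

/-- The Wasserstein-1 distance on the path space with the `ℓ¹` cost `|x-y|₁`. -/
def W1l1 {d T : ℕ} (μ ν : Measure (Traj d T)) : ℝ≥0∞ :=
  ⨅ π ∈ Cpl μ ν, ∫⁻ q, ENNReal.ofReal (∑ i, ∑ j, |q.1 i j - q.2 i j|) ∂π

/-- The adapted Wasserstein-1 distance on the path space with the `ℓ¹` cost `|x-y|₁`. -/
def AW1l1 {d T : ℕ} (μ ν : Measure (Traj d T)) : ℝ≥0∞ :=
  ⨅ π ∈ BCpl μ ν, ∫⁻ q, ENNReal.ofReal (∑ i, ∑ j, |q.1 i j - q.2 i j|) ∂π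

/-! ### Tensor products on the two-step path space -/

/-- The function `x ↦ u x₁ * v x₂` on the path space `ℝ²`. -/
def tensor (u v : ℝ → ℝ) (x : Traj 1 2) : ℝ := u (x 0 0) * v (x 1 0)

lemma measurePreserving_coords :
    MeasurePreserving (fun x : Traj 1 2 => (x 0 0, x 1 0)) := by
  have h := (volume_preserving_finTwoArrow (Fin 1 → ℝ))
  have h₁ := volume_preserving_funUnique (Fin 1) ℝ
  exact (h₁.prod h₁).comp h

lemma measurableEmbedding_coords :
    MeasurableEmbedding (fun x : Traj 1 2 => (x 0 0, x 1 0)) :=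
  (MeasurableEquiv.finTwoArrow.trans ((MeasurableEquiv.funUnique (Fin 1) ℝ).prodCongr
    (MeasurableEquiv.funUnique (Fin 1) ℝ))).measurableEmbedding

lemma measurable_tensor {u v : ℝ → ℝ} (hu : Measurable u) (hv : Measurable v) :
    Measurable (tensor u v) := by
  unfold tensor; fun_prop

lemma integral_tensor (u v : ℝ → ℝ) :
    ∫ x, tensor u v x = (∫ t, u t) * ∫ t, v t := by
  rw [← integral_prod_mul]
  exact measurePreserving_coords.integral_comp measurableEmbedding_coords
    (fun z : ℝ × ℝ => u z.1 * v z.2)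

lemma integrable_tensor {u v : ℝ → ℝ} (hu : Integrable u) (hv : Integrable v) :
    Integrable (tensor u v) :=
  measurePreserving_coords.integrable_comp_of_integrable (hu.mul_prod hv)

lemma lintegral_coords_mul {u v : ℝ → ℝ≥0∞} (hu : Measurable u) (hv : Measurable v) :
    ∫⁻ x : Traj 1 2, u (x 0 0) * v (x 1 0) = (∫⁻ t, u t) * ∫⁻ t, v t := by
  rw [← lintegral_prod_mul hu.aemeasurable hv.aemeasurable]
  exact measurePreserving_coords.lintegral_comp (f := fun z : ℝ × ℝ => u z.1 * v z.2)
    (by fun_prop)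

/-! ### Iterated partial derivatives of tensor products -/

lemma fderiv_tensor_add {u v u' v' : ℝ → ℝ} (hu : Differentiable ℝ u) (hv : Differentiable ℝ v)
    (hu' : Differentiable ℝ u') (hv' : Differentiable ℝ v') (x e : Traj 1 2) :
    fderiv ℝ (fun x => tensor u v x + tensor u' v' x) x e =
      (deriv u (x 0 0) * e 0 0 * v (x 1 0) + u (x 0 0) * (deriv v (x 1 0) * e 1 0)) +
      (deriv u' (x 0 0) * e 0 0 * v' (x 1 0) + u' (x 0 0) * (deriv v' (x 1 0) * e 1 0)) := by
  have hc (i : Fin 2) : HasFDerivAt (fun x : Traj 1 2 => x i 0)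
      ((ContinuousLinearMap.proj (R := ℝ) (φ := fun _ : Fin 1 => ℝ) 0).comp
        (ContinuousLinearMap.proj (R := ℝ) (φ := fun _ : Fin 2 => Fin 1 → ℝ) i)) x :=
    ((ContinuousLinearMap.proj (R := ℝ) (φ := fun _ : Fin 1 => ℝ) 0).comp
      (ContinuousLinearMap.proj (R := ℝ) (φ := fun _ : Fin 2 => Fin 1 → ℝ) i)).hasFDerivAt
  have hcomp {w : ℝ → ℝ} (hw : Differentiable ℝ w) (i : Fin 2) :=
    (hw (x i 0)).hasDerivAt.comp_hasFDerivAt x (hc i)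
  have h := ((hcomp hu 0).mul (hcomp hv 1)).add ((hcomp hu' 0).mul (hcomp hv' 1))
  have h' : fderiv ℝ (fun x => tensor u v x + tensor u' v' x) x = _ := h.fderiv
  rw [h']
  simp
  ring

lemma iterPDerivP_tensor_add (l : List (Fin 2 × Fin 1)) {u v u' v' : ℝ → ℝ}
    (hu : ContDiff ℝ (⊤ : ℕ∞) u) (hv : ContDiff ℝ (⊤ : ℕ∞) v)
    (hu' : ContDiff ℝ (⊤ : ℕ∞) u') (hv' : ContDiff ℝ (⊤ : ℕ∞) v') :
    iterPDerivP l (fun x => tensor u v x + tensor u' v' x) = fun x =>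
      tensor (iteratedDeriv (l.count (0, 0)) u) (iteratedDeriv (l.count (1, 0)) v) x +
      tensor (iteratedDeriv (l.count (0, 0)) u') (iteratedDeriv (l.count (1, 0)) v') x := by
  induction l generalizing u v u' v' with
  | nil => simp [iterPDerivP]
  | cons p ps ih =>
    have hd {w : ℝ → ℝ} (hw : ContDiff ℝ (⊤ : ℕ∞) w) : Differentiable ℝ w :=
      hw.differentiable (by simp)
    have hD {w : ℝ → ℝ} (hw : ContDiff ℝ (⊤ : ℕ∞) w) : ContDiff ℝ (⊤ : ℕ∞) (deriv w) :=
      (contDiff_infty_iff_deriv.1 hw).2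
    simp only [iterPDerivP, fderiv_tensor_add (hd hu) (hd hv) (hd hu') (hd hv')]
    obtain ⟨i, j⟩ := p
    obtain rfl : j = 0 := Subsingleton.elim _ _
    fin_cases i
    · have := ih (hD hu) hv (hD hu') hv'
      simpa [tensor, iteratedDeriv_succ'] using this
    · have := ih hu (hD hv) hu' (hD hv')
      simpa [tensor, iteratedDeriv_succ'] using this

/-- The list of coordinate directions along which `mderivP α` differentiates. -/
def dirs (α : Fin 2 × Fin 1 → ℕ) : List (Fin 2 × Fin 1) :=
  (Finset.univ : Finset (Fin 2 × Fin 1)).toList.flatMap fun p => List.replicate (α p) p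

lemma count_dirs_le {k : ℕ} {α : Fin 2 × Fin 1 → ℕ} (hα : α ∈ mIdxP 1 2 k)
    (p : Fin 2 × Fin 1) : (dirs α).count p ≤ k := by
  refine List.count_le_length.trans ?_
  have h : mdegP α ≤ k := (Finset.mem_filter.1 hα).2
  rw [dirs, List.length_flatMap]
  simpa [mdegP] using h

/-! ### Bicausal couplings with a product marginal -/

/-- If under `ν` the two coordinates are independent, then for a bicausal coupling of `μ` and `ν`
the first coordinate of `X` is independent of the second coordinate of `Y`. -/
lemma indepFun_of_bicausal {μ ν : Measure (Traj 1 2)} {π : Measure (Traj 1 2 × Traj 1 2)}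
    (hπ : π ∈ BCpl μ ν) (hν : IndepFun (fun y : Traj 1 2 => y 0 0) (fun y => y 1 0) ν) :
    IndepFun (fun q : Traj 1 2 × Traj 1 2 => q.1 0 0) (fun q => q.2 1 0) π := by
  obtain ⟨⟨hprob, -, hsnd⟩, hfin, hbc⟩ := hπ
  have hci := (condIndep_iff _ _ _ _ (sigmaX_le _ _ _) (sigmaY_le _ _ _) π).1
    (hbc 1 le_rfl le_rfl).2
  have hle : (1 : ℕ) ≤ 2 := one_le_two
  have hX : Measurable[sigmaX 1 2 hle] (fun q : Traj 1 2 × Traj 1 2 => q.1 0 0) :=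
    Measurable.comp (g := fun x : Traj 1 1 => x 0 0) (by fun_prop)
      (comap_measurable (fun q : Traj 1 2 × Traj 1 2 => restr 1 hle q.1))
  have hY : Measurable[sigmaY 1 2 (le_refl 2)] (fun q : Traj 1 2 × Traj 1 2 => q.2 1 0) :=
    Measurable.comp (g := fun x : Traj 1 2 => x 1 0) (by fun_prop)
      (comap_measurable (fun q : Traj 1 2 × Traj 1 2 => restr 1 (le_refl 2) q.2))
  have hYm : Measurable (fun q : Traj 1 2 × Traj 1 2 => q.2 1 0) := by fun_prop
  have hindY : IndepFun (fun q : Traj 1 2 × Traj 1 2 => q.2 1 0)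
      (fun q => restr 1 hle q.2) π := by
    have h : IndepFun (fun q : Traj 1 2 × Traj 1 2 => q.2 1 0) (fun q => q.2 0 0) π := by
      rw [indepFun_iff_measure_inter_preimage_eq_mul]
      intro B A hB hA
      have h := hν.symm.measure_inter_preimage_eq_mul B A hB hA
      have h₀ : Measurable (fun y : Traj 1 2 => y 0 0) := by fun_prop
      have h₁ : Measurable (fun y : Traj 1 2 => y 1 0) := by fun_prop
      rwa [← hsnd, Measure.map_apply measurable_snd ((h₁ hB).inter (h₀ hA)),
        Measure.map_apply measurable_snd (h₁ hB), Measure.map_apply measurable_snd (h₀ hA)] at h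
    have hrestr : (fun q : Traj 1 2 × Traj 1 2 => restr 1 hle q.2) =
        (fun t : ℝ => fun (_ _ : Fin 1) => t) ∘ fun q => q.2 0 0 := by
      ext q i j
      obtain rfl : i = 0 := Subsingleton.elim _ _
      obtain rfl : j = 0 := Subsingleton.elim _ _
      rfl
    rw [hrestr]
    exact h.comp (φ := id) measurable_id
      (measurable_pi_lambda _ fun _ => measurable_pi_lambda _ fun _ => measurable_id)
  rw [indepFun_iff_measure_inter_preimage_eq_mul]
  intro A B hA hB
  set a := (fun q : Traj 1 2 × Traj 1 2 => q.1 0 0) ⁻¹' A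
  set b := (fun q : Traj 1 2 × Traj 1 2 => q.2 1 0) ⁻¹' B
  have hab := hci a b (hX hA) (hY hB)
  have hbm : MeasurableSet b := hYm hB
  have ham : MeasurableSet a := sigmaX_le _ _ _ _ (hX hA)
  have hbconst : π⟦b | sigmaY 1 2 hle⟧ =ᵐ[π] fun _ => π.real b := by
    have := condExp_indep_eq (μ := π) (f := b.indicator fun _ => (1 : ℝ)) hYm.comap_le
      (sigmaY_le 1 2 hle) (stronglyMeasurable_const.indicator ⟨B, hB, rfl⟩) hindY
    simpa [integral_indicator hbm] using this
  have key : π.real (a ∩ b) = π.real a * π.real b := by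
    have h1 := integral_condExp (μ := π) (sigmaY_le 1 2 hle)
      (f := (a ∩ b).indicator fun _ => (1 : ℝ))
    have h2 := integral_condExp (μ := π) (sigmaY_le 1 2 hle) (f := a.indicator fun _ => (1 : ℝ))
    rw [integral_indicator (ham.inter hbm)] at h1
    rw [integral_indicator ham] at h2
    simp only [integral_const, measureReal_restrict_apply_univ, smul_eq_mul, mul_one] at h1 h2
    rw [← h1, ← h2, ← integral_mul_const]
    refine integral_congr_ae ?_
    filter_upwards [hab, hbconst] with q hq hq'
    rw [hq, Pi.mul_apply, hq']
  rw [measureReal_def, measureReal_def, measureReal_def, ← ENNReal.toReal_mul] at key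
  exact (ENNReal.toReal_eq_toReal_iff' (by finiteness) (by finiteness)).1 key

/-! ### Profiles -/

/-- A smooth probability density supported in `[0, 1]`. -/
def baseDensity : ℝ → ℝ :=
  (⟨1 / 4, 1 / 2, by norm_num, by norm_num⟩ : ContDiffBump (1 / 2 : ℝ)).normed volume

/-- A smooth nonnegative function with values in `[0, 1]`, positive exactly on `(-1/4, 0)`. -/
def lobe (t : ℝ) : ℝ :=
  (⟨1 / 16, 1 / 8, by norm_num, by norm_num⟩ : ContDiffBump (0 : ℝ)) (t + 1 / 8)

/-- A smooth function of mean zero supported in `[-1/4, 1/4]`. -/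
def osc (t : ℝ) : ℝ := lobe t - lobe (t - 1 / 4)

/-- The profile `w` centred at `1/2`, with amplitude `a` and width `ε`. -/
def scaled (a ε : ℝ) (w : ℝ → ℝ) (t : ℝ) : ℝ := a * w ((t - 1 / 2) / ε)

lemma contDiff_baseDensity : ContDiff ℝ (⊤ : ℕ∞) baseDensity := ContDiffBump.contDiff_normed _

lemma baseDensity_nonneg (t : ℝ) : 0 ≤ baseDensity t := ContDiffBump.nonneg_normed _ _

lemma hasCompactSupport_baseDensity : HasCompactSupport baseDensity :=
  ContDiffBump.hasCompactSupport_normed _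

lemma integral_baseDensity : ∫ t, baseDensity t = 1 := ContDiffBump.integral_normed _

lemma integrable_baseDensity : Integrable baseDensity := ContDiffBump.integrable_normed _

lemma baseDensity_eq_zero {t : ℝ} (ht : t ∉ Set.Icc (0 : ℝ) 1) : baseDensity t = 0 := by
  by_contra h
  have hs : t ∈ Function.support baseDensity := h
  rw [baseDensity, ContDiffBump.support_normed_eq, Real.ball_eq_Ioo] at hs
  norm_num at hs
  exact ht ⟨hs.1.le, hs.2.le⟩

lemma one_le_baseDensity {t : ℝ} (ht : |t - 1 / 2| ≤ 1 / 4) : 1 ≤ baseDensity t := by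
  rw [baseDensity, ContDiffBump.normed_def]
  set f : ContDiffBump (1 / 2 : ℝ) := ⟨1 / 4, 1 / 2, by norm_num, by norm_num⟩
  rw [f.one_of_mem_closedBall (by simpa [f, Real.dist_eq] using ht),
    one_le_div f.integral_pos]
  refine (f.integral_le_measure_closedBall volume).trans ?_
  rw [Real.closedBall_eq_Icc, Real.volume_real_Icc_of_le] <;> norm_num [f]

lemma contDiff_lobe : ContDiff ℝ (⊤ : ℕ∞) lobe :=
  (ContDiffBump.contDiff _).comp (contDiff_id.add contDiff_const)

lemma lobe_nonneg (t : ℝ) : 0 ≤ lobe t := ContDiffBump.nonneg _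

lemma lobe_le_one (t : ℝ) : lobe t ≤ 1 := ContDiffBump.le_one _

lemma lobe_eq_zero {t : ℝ} (ht : t ∉ Set.Ioo (-(1 / 4) : ℝ) 0) : lobe t = 0 := by
  refine ContDiffBump.zero_of_le_dist _ ?_
  rw [Real.dist_eq, sub_zero]
  by_contra! h
  rw [abs_lt] at h
  exact ht ⟨by linarith [h.1], by linarith [h.2]⟩

lemma hasCompactSupport_lobe : HasCompactSupport lobe :=
  HasCompactSupport.intro (isCompact_Icc (a := -(1 / 4 : ℝ)) (b := 0)) fun _ ht =>
    lobe_eq_zero fun h => ht ⟨h.1.le, h.2.le⟩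

lemma integrable_lobe : Integrable lobe :=
  contDiff_lobe.continuous.integrable_of_hasCompactSupport hasCompactSupport_lobe

lemma integral_lobe_nonneg : 0 ≤ ∫ t, lobe t := integral_nonneg lobe_nonneg

lemma integral_lobe_le_one : ∫ t, lobe t ≤ 1 := by
  unfold lobe
  set f : ContDiffBump (0 : ℝ) := ⟨1 / 16, 1 / 8, by norm_num, by norm_num⟩
  rw [integral_add_right_eq_self (fun t => f t)]
  refine (f.integral_le_measure_closedBall volume).trans ?_
  rw [Real.closedBall_eq_Icc, Real.volume_real_Icc_of_le] <;> norm_num [f]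

lemma contDiff_osc : ContDiff ℝ (⊤ : ℕ∞) osc :=
  contDiff_lobe.sub (contDiff_lobe.comp (contDiff_id.sub contDiff_const))

lemma osc_eq_zero {t : ℝ} (ht : 1 / 4 < |t|) : osc t = 0 := by
  rw [osc, lobe_eq_zero, lobe_eq_zero, sub_zero]
  · rintro ⟨h₁, h₂⟩
    exact absurd ht (not_lt.2 (abs_le.2 ⟨by linarith, by linarith⟩))
  · rintro ⟨h₁, h₂⟩
    exact absurd ht (not_lt.2 (abs_le.2 ⟨by linarith, by linarith⟩))

lemma abs_osc_le_one (t : ℝ) : |osc t| ≤ 1 := by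
  rw [osc, abs_le]
  constructor <;> linarith [lobe_nonneg t, lobe_le_one t, lobe_nonneg (t - 1 / 4),
    lobe_le_one (t - 1 / 4)]

lemma hasCompactSupport_osc : HasCompactSupport osc :=
  HasCompactSupport.intro (isCompact_Icc (a := -(1 / 4 : ℝ)) (b := 1 / 4)) fun _ ht =>
    osc_eq_zero (by rw [← not_le, abs_le]; exact ht)

lemma integral_osc : ∫ t, osc t = 0 := by
  unfold osc
  rw [integral_sub integrable_lobe (integrable_lobe.comp_sub_right _),
    integral_sub_right_eq_self lobe, sub_self]

lemma integral_osc_sq_pos : 0 < ∫ t, osc t * osc t := by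
  have hc : Continuous fun t => osc t * osc t :=
    contDiff_osc.continuous.mul contDiff_osc.continuous
  refine hc.integral_pos_of_hasCompactSupport_nonneg_nonzero
    hasCompactSupport_osc.mul_right (fun t => mul_self_nonneg _) (x := -(1 / 8)) ?_
  rw [mul_self_ne_zero, osc, lobe_eq_zero (t := -(1 / 8) - 1 / 4) (by norm_num), sub_zero]
  exact (ContDiffBump.pos_of_mem_ball _ (by norm_num)).ne'

lemma contDiff_scaled {w : ℝ → ℝ} (hw : ContDiff ℝ (⊤ : ℕ∞) w) (a ε : ℝ) :
    ContDiff ℝ (⊤ : ℕ∞) (scaled a ε w) :=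
  contDiff_const.mul (hw.comp ((contDiff_id.sub contDiff_const).div_const ε))

lemma integral_scaled (a : ℝ) {ε : ℝ} (hε : 0 < ε) (w : ℝ → ℝ) :
    ∫ t, scaled a ε w t = a * ε * ∫ t, w t := by
  unfold scaled
  rw [integral_const_mul, integral_sub_right_eq_self (fun t => w (t / ε)),
    Measure.integral_comp_div, abs_of_pos hε, smul_eq_mul, mul_assoc]

lemma integrable_scaled (a : ℝ) {ε : ℝ} (hε : 0 < ε) {w : ℝ → ℝ} (hw : Integrable w) :
    Integrable (scaled a ε w) :=
  ((hw.comp_div hε.ne').comp_sub_right (1 / 2)).const_mul a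

lemma iteratedDeriv_scaled (a ε : ℝ) {w : ℝ → ℝ} (hw : ContDiff ℝ (⊤ : ℕ∞) w) (i : ℕ) :
    iteratedDeriv i (scaled a ε w) = scaled (a * ε⁻¹ ^ i) ε (iteratedDeriv i w) := by
  have hwi : ContDiff ℝ i w := hw.of_le (mod_cast le_top)
  have h₁ := iteratedDeriv_comp_const_mul hwi ε⁻¹
  have h₂ : scaled a ε w = fun t => a * (fun t => w (ε⁻¹ * t)) (t - 1 / 2) := by
    ext t; simp [scaled, div_eq_inv_mul]
  ext t
  rw [h₂, iteratedDeriv_const_mul_field,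
    iteratedDeriv_comp_sub_const i (fun t => w (ε⁻¹ * t)) (1 / 2)]
  simp only [h₁, scaled, div_eq_inv_mul]
  ring

lemma scaled_osc (a : ℝ) {ε : ℝ} (hε : 0 < ε) (t : ℝ) :
    scaled a ε osc t = scaled a ε lobe t - scaled a ε lobe (t - ε / 4) := by
  have h : (t - ε / 4 - 1 / 2) / ε = (t - 1 / 2) / ε - 1 / 4 := by field_simp; ring
  rw [scaled, osc, scaled, scaled, h, mul_sub]

lemma scaled_lobe_nonneg {a : ℝ} (ha : 0 ≤ a) (ε t : ℝ) : 0 ≤ scaled a ε lobe t :=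
  mul_nonneg ha (lobe_nonneg _)

/-- A profile bounded by `1` and supported in `[-1/4, 1/4]` is dominated by `baseDensity`. -/
lemma abs_scaled_le {w : ℝ → ℝ} (hw₁ : ∀ t, |w t| ≤ 1) (hw₀ : ∀ t, 1 / 4 < |t| → w t = 0)
    (a : ℝ) {ε : ℝ} (hε : 0 < ε) (hε₁ : ε ≤ 1) (t : ℝ) :
    |scaled a ε w t| ≤ |a| * baseDensity t := by
  rw [scaled, abs_mul]
  refine mul_le_mul_of_nonneg_left ?_ (abs_nonneg a)
  by_cases h : 1 / 4 < |(t - 1 / 2) / ε|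
  · rw [hw₀ _ h, abs_zero]
    exact baseDensity_nonneg t
  · refine (hw₁ _).trans (one_le_baseDensity ?_)
    rw [not_lt, abs_div, abs_of_pos hε, div_le_iff₀ hε] at h
    linarith

lemma abs_scaled_osc_le (a : ℝ) {ε : ℝ} (hε : 0 < ε) (hε₁ : ε ≤ 1) (t : ℝ) :
    |scaled a ε osc t| ≤ |a| * baseDensity t :=
  abs_scaled_le abs_osc_le_one (fun _ => osc_eq_zero) a hε hε₁ t

lemma scaled_lobe_le {a : ℝ} (ha : 0 ≤ a) {ε : ℝ} (hε : 0 < ε) (hε₁ : ε ≤ 1) (t : ℝ) :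
    scaled a ε lobe t ≤ a * baseDensity t := by
  have h := abs_scaled_le (w := lobe) (fun t => abs_le.2 ⟨by linarith [lobe_nonneg t],
    lobe_le_one t⟩) (fun t ht => lobe_eq_zero fun h => ht.not_ge
      (abs_le.2 ⟨h.1.le, by linarith [h.2]⟩)) a hε hε₁ t
  rw [abs_of_nonneg ha] at h
  exact (le_abs_self _).trans h

lemma scaled_lobe_sub_le {a : ℝ} (ha : 0 ≤ a) {ε : ℝ} (hε : 0 < ε) (hε₁ : ε ≤ 1) (t : ℝ) :
    scaled a ε lobe (t - ε / 4) ≤ a * baseDensity t := by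
  have h := abs_scaled_le (w := fun t => lobe (t - 1 / 4))
    (fun t => abs_le.2 ⟨by linarith [lobe_nonneg (t - 1 / 4)], lobe_le_one _⟩)
    (fun t ht => lobe_eq_zero fun h => ht.not_ge
      (abs_le.2 ⟨by linarith [h.1], by linarith [h.2]⟩)) a hε hε₁ t
  have h' : (t - ε / 4 - 1 / 2) / ε = (t - 1 / 2) / ε - 1 / 4 := by field_simp; ring
  rw [abs_of_nonneg ha] at h
  rw [scaled, h']
  exact (le_abs_self _).trans h

/-! ### The densities -/

/-- The product density perturbed by an oscillation of amplitude `a` and width `ε` in the first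
coordinate. -/
def density (a ε : ℝ) (x : Traj 1 2) : ℝ :=
  tensor baseDensity baseDensity x + tensor (scaled a ε osc) (scaled 1 1 osc) x

/-- The law with density `density a ε`. -/
def law (a ε : ℝ) : Measure (Traj 1 2) :=
  volume.withDensity fun x => ENNReal.ofReal (density a ε x)

lemma contDiff_tensor {u v : ℝ → ℝ} (hu : ContDiff ℝ (⊤ : ℕ∞) u) (hv : ContDiff ℝ (⊤ : ℕ∞) v) :
    ContDiff ℝ (⊤ : ℕ∞) (tensor u v) :=
  (hu.comp (contDiff_apply_apply ℝ ℝ 0 0)).mul (hv.comp (contDiff_apply_apply ℝ ℝ 1 0))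

lemma contDiff_density (a ε : ℝ) : ContDiff ℝ (⊤ : ℕ∞) (density a ε) :=
  (contDiff_tensor contDiff_baseDensity contDiff_baseDensity).add
    (contDiff_tensor (contDiff_scaled contDiff_osc a ε) (contDiff_scaled contDiff_osc 1 1))

lemma density_zero (ε : ℝ) : density 0 ε = tensor baseDensity baseDensity := by
  ext x; simp [density, tensor, scaled]

lemma density_nonneg {a ε : ℝ} (ha : |a| ≤ 1) (hε : 0 < ε) (hε₁ : ε ≤ 1) (x : Traj 1 2) :
    0 ≤ density a ε x := by
  have h₁ := abs_scaled_osc_le a hε hε₁ (x 0 0)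
  have h₂ := abs_scaled_osc_le 1 one_pos le_rfl (x 1 0)
  have h₀ := baseDensity_nonneg (x 0 0)
  rw [abs_one, one_mul] at h₂
  have h : |tensor (scaled a ε osc) (scaled 1 1 osc) x| ≤ tensor baseDensity baseDensity x := by
    rw [tensor, abs_mul]
    exact mul_le_mul (h₁.trans (mul_le_of_le_one_left h₀ ha)) h₂ (abs_nonneg _) h₀
  rw [density]
  linarith [neg_abs_le (tensor (scaled a ε osc) (scaled 1 1 osc) x)]

lemma density_eq_zero {a ε : ℝ} (hε : 0 < ε) (hε₁ : ε ≤ 1) {x : Traj 1 2}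
    (hx : ¬ ∀ i j, x i j ∈ Set.Icc (0 : ℝ) 1) : density a ε x = 0 := by
  have h₁ := abs_scaled_osc_le a hε hε₁ (x 0 0)
  have h₂ := abs_scaled_osc_le 1 one_pos le_rfl (x 1 0)
  have hor : x 0 0 ∉ Set.Icc (0 : ℝ) 1 ∨ x 1 0 ∉ Set.Icc (0 : ℝ) 1 := by
    by_contra! h
    refine hx fun i j => ?_
    obtain rfl : j = 0 := Subsingleton.elim _ _
    fin_cases i
    exacts [h.1, h.2]
  rcases hor with h | h
  · rw [baseDensity_eq_zero h, mul_zero, abs_nonpos_iff] at h₁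
    simp [density, tensor, h₁, baseDensity_eq_zero h]
  · rw [baseDensity_eq_zero h, mul_zero, abs_nonpos_iff] at h₂
    simp [density, tensor, h₂, baseDensity_eq_zero h]

lemma integrable_osc : Integrable osc :=
  contDiff_osc.continuous.integrable_of_hasCompactSupport hasCompactSupport_osc

lemma integrable_density (a : ℝ) {ε : ℝ} (hε : 0 < ε) : Integrable (density a ε) :=
  (integrable_tensor integrable_baseDensity integrable_baseDensity).add
    (integrable_tensor (integrable_scaled a hε integrable_osc)
      (integrable_scaled 1 one_pos integrable_osc))

lemma integral_density (a : ℝ) {ε : ℝ} (hε : 0 < ε) : ∫ x, density a ε x = 1 := by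
  unfold density
  rw [integral_add (integrable_tensor integrable_baseDensity integrable_baseDensity)
    (integrable_tensor (integrable_scaled a hε integrable_osc)
      (integrable_scaled 1 one_pos integrable_osc)), integral_tensor, integral_tensor,
    integral_baseDensity, integral_scaled 1 one_pos, integral_osc]
  simp

lemma isProbabilityMeasure_law {a ε : ℝ} (ha : |a| ≤ 1) (hε : 0 < ε) (hε₁ : ε ≤ 1) :
    IsProbabilityMeasure (law a ε) := by
  refine ⟨?_⟩
  rw [law, withDensity_apply _ MeasurableSet.univ, Measure.restrict_univ,
    ← ofReal_integral_eq_lintegral_ofReal (integrable_density a hε)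
      (Filter.Eventually.of_forall (density_nonneg ha hε hε₁)), integral_density a hε,
    ENNReal.ofReal_one]

lemma measurableSet_cube : MeasurableSet {x : Traj 1 2 | ∀ i j, x i j ∈ Set.Icc (0 : ℝ) 1} := by
  measurability

lemma law_compl_cube {a ε : ℝ} (hε : 0 < ε) (hε₁ : ε ≤ 1) :
    law a ε {x : Traj 1 2 | ∀ i j, x i j ∈ Set.Icc (0 : ℝ) 1}ᶜ = 0 := by
  rw [law, withDensity_apply _ measurableSet_cube.compl]
  refine setLIntegral_eq_zero measurableSet_cube.compl fun x hx => ?_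
  simp [density_eq_zero hε hε₁ hx]

/-! ### Sobolev bounds -/

lemma mderivP_density (a ε : ℝ) (α : Fin 2 × Fin 1 → ℕ) :
    mderivP α (density a ε) = fun x =>
      tensor (iteratedDeriv ((dirs α).count (0, 0)) baseDensity)
        (iteratedDeriv ((dirs α).count (1, 0)) baseDensity) x +
      tensor (scaled (a * ε⁻¹ ^ (dirs α).count (0, 0)) ε
          (iteratedDeriv ((dirs α).count (0, 0)) osc))
        (scaled 1 1 (iteratedDeriv ((dirs α).count (1, 0)) osc)) x := by
  have h := iterPDerivP_tensor_add (dirs α) contDiff_baseDensity contDiff_baseDensity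
    (contDiff_scaled contDiff_osc a ε) (contDiff_scaled contDiff_osc 1 1)
  rw [iteratedDeriv_scaled a ε contDiff_osc, iteratedDeriv_scaled 1 1 contDiff_osc] at h
  simp only [inv_one, one_pow, mul_one] at h
  exact h

lemma integrable_iteratedDeriv {w : ℝ → ℝ} (hw : ContDiff ℝ (⊤ : ℕ∞) w)
    (hc : HasCompactSupport w) (i : ℕ) : Integrable (iteratedDeriv i w) := by
  refine (hw.continuous_iteratedDeriv i (mod_cast le_top)).integrable_of_hasCompactSupport ?_
  induction i with
  | zero => simpa using hc
  | succ i ih => rw [iteratedDeriv_succ]; exact ih.deriv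

lemma integrable_mderivP_density (a : ℝ) {ε : ℝ} (hε : 0 < ε) (α : Fin 2 × Fin 1 → ℕ) :
    Integrable (mderivP α (density a ε)) := by
  rw [mderivP_density]
  have hb := integrable_iteratedDeriv contDiff_baseDensity hasCompactSupport_baseDensity
  have ho := integrable_iteratedDeriv contDiff_osc hasCompactSupport_osc
  exact (integrable_tensor (hb _) (hb _)).add
    (integrable_tensor (integrable_scaled _ hε (ho _)) (integrable_scaled _ one_pos (ho _)))

lemma integral_abs_tensor (u v : ℝ → ℝ) :
    ∫ x, |tensor u v x| = (∫ t, |u t|) * ∫ t, |v t| := by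
  rw [← integral_tensor]
  simp [tensor, abs_mul]

lemma integral_abs_scaled (a : ℝ) {ε : ℝ} (hε : 0 < ε) (w : ℝ → ℝ) :
    ∫ t, |scaled a ε w t| = |a| * ε * ∫ t, |w t| := by
  rw [← integral_scaled _ hε]
  simp [scaled, abs_mul]

/-- A bound for the Sobolev norms of all the densities under consideration. -/
def sobBound (k : ℕ) : ℝ :=
  ∑ α ∈ mIdxP 1 2 k,
    ((∫ t, |iteratedDeriv ((dirs α).count (0, 0)) baseDensity t|) *
      (∫ t, |iteratedDeriv ((dirs α).count (1, 0)) baseDensity t|) +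
    (∫ t, |iteratedDeriv ((dirs α).count (0, 0)) osc t|) *
      (∫ t, |iteratedDeriv ((dirs α).count (1, 0)) osc t|))

lemma sobNormP_density_le {k : ℕ} (hk : 1 ≤ k) {a ε : ℝ} (hε : 0 < ε) (hε₁ : ε ≤ 1)
    (ha : |a| ≤ ε ^ (k - 1)) : sobNormP 1 2 k (density a ε) ≤ sobBound k := by
  refine Finset.sum_le_sum fun α hα => ?_
  have hb := integrable_iteratedDeriv contDiff_baseDensity hasCompactSupport_baseDensity
  have ho := integrable_iteratedDeriv contDiff_osc hasCompactSupport_osc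
  have hi := count_dirs_le hα (0, 0)
  rw [mderivP_density]
  set i := (dirs α).count (0, 0)
  set j := (dirs α).count (1, 0)
  have h₁ := integrable_tensor (hb i) (hb j)
  have h₂ := integrable_tensor (integrable_scaled (a * ε⁻¹ ^ i) hε (ho i))
    (integrable_scaled 1 one_pos (ho j))
  refine (integral_mono (h₁.add h₂).abs (h₁.abs.add h₂.abs) fun x => abs_add_le _ _).trans ?_
  simp only [Pi.add_apply]
  rw [integral_add h₁.abs h₂.abs, integral_abs_tensor, integral_abs_tensor,
    integral_abs_scaled _ hε, integral_abs_scaled _ one_pos, abs_one, one_mul, one_mul]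
  have hcoef : |a * ε⁻¹ ^ i| * ε ≤ 1 := by
    rw [abs_mul, abs_of_nonneg (by positivity : 0 ≤ ε⁻¹ ^ i), inv_pow, mul_right_comm,
      ← div_eq_mul_inv, div_le_one (by positivity)]
    calc |a| * ε ≤ ε ^ (k - 1) * ε := by gcongr
      _ = ε ^ k := by rw [← pow_succ, Nat.sub_add_cancel hk]
      _ ≤ ε ^ i := pow_le_pow_of_le_one hε.le hε₁ hi
  gcongr
  exact mul_le_of_le_one_left (integral_nonneg fun t => abs_nonneg _) hcoef

/-! ### Integrals against the laws -/

lemma integrable_mul_of_hasCompactSupport {u w : ℝ → ℝ} (hu : Continuous u) (hw : Continuous w)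
    (hc : HasCompactSupport w) : Integrable fun t => u t * w t :=
  (hu.mul hw).integrable_of_hasCompactSupport hc.mul_left

lemma hasCompactSupport_scaled_osc (a : ℝ) {ε : ℝ} (hε : 0 < ε) (hε₁ : ε ≤ 1) :
    HasCompactSupport (scaled a ε osc) :=
  hasCompactSupport_baseDensity.mono fun t ht ht₀ => by
    have h := abs_scaled_osc_le a hε hε₁ t
    rw [ht₀, mul_zero, abs_nonpos_iff] at h
    exact ht h

lemma integral_tensor_law {a ε : ℝ} (ha : |a| ≤ 1) (hε : 0 < ε) (hε₁ : ε ≤ 1) {u v : ℝ → ℝ}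
    (hu : Continuous u) (hv : Continuous v) :
    ∫ x, tensor u v x ∂law a ε =
      (∫ t, u t * baseDensity t) * (∫ t, v t * baseDensity t) +
      (∫ t, u t * scaled a ε osc t) * (∫ t, v t * scaled 1 1 osc t) := by
  have hb {w : ℝ → ℝ} (hw : Continuous w) := integrable_mul_of_hasCompactSupport hw
    contDiff_baseDensity.continuous hasCompactSupport_baseDensity
  have ho {w : ℝ → ℝ} (hw : Continuous w) (a : ℝ) {ε : ℝ} (hε : 0 < ε) (hε₁ : ε ≤ 1) :=
    integrable_mul_of_hasCompactSupport hw (contDiff_scaled contDiff_osc a ε).continuous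
      (hasCompactSupport_scaled_osc a hε hε₁)
  rw [law, integral_withDensity_eq_integral_toReal_smul
    (contDiff_density a ε).continuous.measurable.ennreal_ofReal
    (Filter.Eventually.of_forall fun _ => ENNReal.ofReal_lt_top),
    ← integral_tensor, ← integral_tensor, ← integral_add (integrable_tensor (hb hu) (hb hv))
      (integrable_tensor (ho hu a hε hε₁) (ho hv 1 one_pos le_rfl))]
  refine integral_congr_ae (Filter.Eventually.of_forall fun x => ?_)
  dsimp only
  rw [ENNReal.toReal_ofReal (density_nonneg ha hε hε₁ x)]
  simp only [smul_eq_mul, density, tensor]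
  ring

/-- The energy `∫ osc²`. -/
def oscEnergy : ℝ := ∫ t, osc t * osc t

lemma integral_scaled_osc_mul (a : ℝ) {ε : ℝ} (hε : 0 < ε) :
    ∫ t, scaled 1 ε osc t * scaled a ε osc t = a * ε * oscEnergy := by
  rw [oscEnergy, ← integral_scaled a hε (fun t => osc t * osc t)]
  congr 1 with t
  simp only [scaled]
  ring

lemma integral_scaled_osc {a ε : ℝ} (hε : 0 < ε) : ∫ t, scaled a ε osc t = 0 := by
  rw [integral_scaled a hε, integral_osc, mul_zero]

lemma indepFun_law_zero (ε : ℝ) :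
    IndepFun (fun y : Traj 1 2 => y 0 0) (fun y => y 1 0) (law 0 ε) := by
  have hr : Measurable fun t => ENNReal.ofReal (baseDensity t) :=
    contDiff_baseDensity.continuous.measurable.ennreal_ofReal
  have h {A B : Set ℝ} (hA : MeasurableSet A) (hB : MeasurableSet B) :
      law 0 ε ((fun y : Traj 1 2 => y 0 0) ⁻¹' A ∩ (fun y : Traj 1 2 => y 1 0) ⁻¹' B) =
        (∫⁻ t in A, ENNReal.ofReal (baseDensity t)) *
          ∫⁻ t in B, ENNReal.ofReal (baseDensity t) := by
    have h₀ : Measurable (fun y : Traj 1 2 => y 0 0) := by fun_prop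
    have h₁ : Measurable (fun y : Traj 1 2 => y 1 0) := by fun_prop
    have hm := (h₀ hA).inter (h₁ hB)
    rw [law, withDensity_apply _ hm, ← lintegral_indicator hm, ← lintegral_indicator hA,
      ← lintegral_indicator hB,
      ← lintegral_coords_mul (hr.indicator hA) (hr.indicator hB), density_zero]
    refine lintegral_congr fun x => ?_
    by_cases hxA : x 0 0 ∈ A <;> by_cases hxB : x 1 0 ∈ B <;>
      simp [Set.indicator, hxA, hxB, tensor, ENNReal.ofReal_mul (baseDensity_nonneg _)]
  have htot : ∫⁻ t, ENNReal.ofReal (baseDensity t) = 1 := by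
    rw [← ofReal_integral_eq_lintegral_ofReal integrable_baseDensity
      (Filter.Eventually.of_forall baseDensity_nonneg), integral_baseDensity, ENNReal.ofReal_one]
  rw [indepFun_iff_measure_inter_preimage_eq_mul]
  intro A B hA hB
  have hA_eq := h hA MeasurableSet.univ
  have hB_eq := h MeasurableSet.univ hB
  rw [Set.preimage_univ, Set.inter_univ, Measure.restrict_univ, htot, mul_one] at hA_eq
  rw [Set.preimage_univ, Set.univ_inter, Measure.restrict_univ, htot, one_mul] at hB_eq
  rw [h hA hB, hA_eq, hB_eq]

/-! ### Lower bounds for transport costs -/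

/-- The `ℓ¹` transport cost. -/
def cost (q : Traj 1 2 × Traj 1 2) : ℝ := ∑ i, ∑ j, |q.1 i j - q.2 i j|

lemma cost_eq (q : Traj 1 2 × Traj 1 2) :
    cost q = |q.1 0 0 - q.2 0 0| + |q.1 1 0 - q.2 1 0| := by
  simp [cost]

lemma ofReal_integral_div_le_lintegral_cost {π : Measure (Traj 1 2 × Traj 1 2)}
    {F : Traj 1 2 × Traj 1 2 → ℝ} {M : ℝ} (hM : 0 < M) (hF : ∀ q, |F q| ≤ M * cost q) :
    ENNReal.ofReal ((∫ q, F q ∂π) / M) ≤ ∫⁻ q, ENNReal.ofReal (cost q) ∂π := by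
  have hbound : ∀ q, ‖F q / M‖ₑ ≤ ENNReal.ofReal (cost q) := fun q => by
    rw [Real.enorm_eq_ofReal_abs, abs_div, abs_of_pos hM]
    exact ENNReal.ofReal_le_ofReal ((div_le_iff₀' hM).2 (hF q))
  rw [← integral_div]
  refine le_trans ?_ ((enorm_integral_le_lintegral_enorm _).trans (lintegral_mono hbound))
  rw [Real.enorm_eq_ofReal_abs]
  exact ENNReal.ofReal_le_ofReal (le_abs_self _)

lemma exists_lipschitz_osc : ∃ L : ℝ, 0 < L ∧ ∀ s t, |osc s - osc t| ≤ L * |s - t| := by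
  obtain ⟨C, hC⟩ := contDiff_osc.lipschitzWith_of_hasCompactSupport hasCompactSupport_osc
    (by simp)
  refine ⟨C + 1, by positivity, fun s t => ?_⟩
  have h := hC.dist_le_mul s t
  rw [Real.dist_eq, Real.dist_eq] at h
  nlinarith [abs_nonneg (s - t)]

lemma abs_scaled_one_osc_le_one (ε t : ℝ) : |scaled 1 ε osc t| ≤ 1 := by
  simpa [scaled] using abs_osc_le_one _

lemma abs_scaled_one_osc_sub_le {L : ℝ} (hL : ∀ s t, |osc s - osc t| ≤ L * |s - t|) {ε : ℝ}
    (hε : 0 < ε) (s t : ℝ) :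
    |scaled 1 ε osc s - scaled 1 ε osc t| ≤ L / ε * |s - t| := by
  have h := hL ((s - 1 / 2) / ε) ((t - 1 / 2) / ε)
  rw [← sub_div, abs_div, abs_of_pos hε, sub_sub_sub_cancel_right] at h
  simp only [scaled, one_mul]
  calc _ ≤ _ := h
    _ = _ := by ring

lemma integrable_of_continuous_of_abs_le {Ω : Type*} [TopologicalSpace Ω] [MeasurableSpace Ω]
    [OpensMeasurableSpace Ω] {π : Measure Ω} [IsFiniteMeasure π] {F : Ω → ℝ}
    (hF : Continuous F) {C : ℝ} (hC : ∀ q, |F q| ≤ C) : Integrable F π :=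
  Integrable.of_bound hF.measurable.aestronglyMeasurable C (Filter.Eventually.of_forall hC)

lemma continuous_scaled_osc (a ε : ℝ) : Continuous (scaled a ε osc) :=
  (contDiff_scaled contDiff_osc a ε).continuous

lemma continuous_tensor {u v : ℝ → ℝ} (hu : Continuous u) (hv : Continuous v) :
    Continuous (tensor u v) := by
  unfold tensor; fun_prop

lemma abs_tensor_scaled_osc_le_one (ε : ℝ) (x : Traj 1 2) :
    |tensor (scaled 1 ε osc) (scaled 1 1 osc) x| ≤ 1 := by
  rw [tensor, abs_mul]
  exact mul_le_one₀ (abs_scaled_one_osc_le_one _ _) (abs_nonneg _) (abs_scaled_one_osc_le_one _ _)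

lemma integral_tensor_osc_law {a ε : ℝ} (ha : |a| ≤ 1) (hε : 0 < ε) (hε₁ : ε ≤ 1) :
    ∫ x, tensor (scaled 1 ε osc) (scaled 1 1 osc) x ∂law a ε =
      (∫ t, scaled 1 ε osc t * baseDensity t) * (∫ t, scaled 1 1 osc t * baseDensity t) +
      a * ε * oscEnergy ^ 2 := by
  rw [integral_tensor_law ha hε hε₁ (continuous_scaled_osc _ _) (continuous_scaled_osc _ _),
    integral_scaled_osc_mul a hε, integral_scaled_osc_mul 1 one_pos]
  ring

lemma ofReal_le_lintegral_cost_of_coupling {L : ℝ} (hL₀ : 0 < L)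
    (hL : ∀ s t, |osc s - osc t| ≤ L * |s - t|) {a ε : ℝ} (ha : |a| ≤ 1) (hε : 0 < ε)
    (hε₁ : ε ≤ 1) {π : Measure (Traj 1 2 × Traj 1 2)} (hπ : π ∈ Cpl (law a ε) (law 0 ε)) :
    ENNReal.ofReal (a * ε * oscEnergy ^ 2 / (L / ε)) ≤ ∫⁻ q, ENNReal.ofReal (cost q) ∂π := by
  obtain ⟨hprob, hfst, hsnd⟩ := hπ
  set φ : Traj 1 2 → ℝ := tensor (scaled 1 ε osc) (scaled 1 1 osc)
  have hφ : Continuous φ := continuous_tensor (continuous_scaled_osc _ _) (continuous_scaled_osc _ _)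
  have hφ₁ : ∀ x, |φ x| ≤ 1 := abs_tensor_scaled_osc_le_one ε
  have hφ_fst : Integrable (fun q : Traj 1 2 × Traj 1 2 => φ q.1) π :=
    integrable_of_continuous_of_abs_le (hφ.comp continuous_fst) fun q => hφ₁ q.1
  have hφ_snd : Integrable (fun q : Traj 1 2 × Traj 1 2 => φ q.2) π :=
    integrable_of_continuous_of_abs_le (hφ.comp continuous_snd) fun q => hφ₁ q.2
  have h : ∫ q, (φ q.1 - φ q.2) ∂π = a * ε * oscEnergy ^ 2 := by
    rw [integral_sub hφ_fst hφ_snd,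
      ← integral_map (φ := Prod.fst) measurable_fst.aemeasurable
        hφ.measurable.aestronglyMeasurable,
      ← integral_map (φ := Prod.snd) measurable_snd.aemeasurable
        hφ.measurable.aestronglyMeasurable, hfst, hsnd, integral_tensor_osc_law ha hε hε₁,
      integral_tensor_osc_law (by simp) hε hε₁]
    ring
  rw [← h]
  refine ofReal_integral_div_le_lintegral_cost (div_pos hL₀ hε) fun q => ?_
  have h₁ := abs_scaled_one_osc_sub_le hL hε (q.1 0 0) (q.2 0 0)
  have h₂ := abs_scaled_one_osc_sub_le hL one_pos (q.1 1 0) (q.2 1 0)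
  have hLε : L / 1 ≤ L / ε := div_le_div_of_nonneg_left hL₀.le hε hε₁
  have hsplit : φ q.1 - φ q.2 =
      (scaled 1 ε osc (q.1 0 0) - scaled 1 ε osc (q.2 0 0)) * scaled 1 1 osc (q.1 1 0) +
      scaled 1 ε osc (q.2 0 0) * (scaled 1 1 osc (q.1 1 0) - scaled 1 1 osc (q.2 1 0)) := by
    simp only [φ, tensor]; ring
  rw [hsplit, cost_eq, mul_add]
  refine (abs_add_le _ _).trans (add_le_add ?_ ?_)
  · rw [abs_mul]
    exact (mul_le_of_le_one_right (abs_nonneg _) (abs_scaled_one_osc_le_one _ _)).trans h₁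
  · rw [abs_mul]
    exact ((mul_le_of_le_one_left (abs_nonneg _) (abs_scaled_one_osc_le_one _ _)).trans h₂).trans
      (mul_le_mul_of_nonneg_right hLε (abs_nonneg _))

lemma ofReal_le_lintegral_cost_of_bicausal {L : ℝ} (hL₀ : 0 < L)
    (hL : ∀ s t, |osc s - osc t| ≤ L * |s - t|) {a ε : ℝ} (ha : |a| ≤ 1) (hε : 0 < ε)
    (hε₁ : ε ≤ 1) {π : Measure (Traj 1 2 × Traj 1 2)} (hπ : π ∈ BCpl (law a ε) (law 0 ε)) :
    ENNReal.ofReal (a * ε * oscEnergy ^ 2 / L) ≤ ∫⁻ q, ENNReal.ofReal (cost q) ∂π := by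
  have hindep := indepFun_of_bicausal hπ (indepFun_law_zero ε)
  obtain ⟨⟨hprob, hfst, hsnd⟩, -⟩ := hπ
  set s : ℝ → ℝ := scaled 1 ε osc
  set χ : ℝ → ℝ := scaled 1 1 osc
  have hs : Continuous s := continuous_scaled_osc _ _
  have hχ : Continuous χ := continuous_scaled_osc _ _
  have hs₁ : ∀ t, |s t| ≤ 1 := abs_scaled_one_osc_le_one ε
  have hχ₁ : ∀ t, |χ t| ≤ 1 := abs_scaled_one_osc_le_one 1
  have hX : ∫ q, s (q.1 0 0) * χ (q.1 1 0) ∂π =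
      (∫ t, s t * baseDensity t) * (∫ t, χ t * baseDensity t) + a * ε * oscEnergy ^ 2 := by
    rw [← integral_tensor_osc_law ha hε hε₁, ← hfst,
      integral_map measurable_fst.aemeasurable
        (continuous_tensor hs hχ).measurable.aestronglyMeasurable]
    rfl
  have hXm : ∫ q, s (q.1 0 0) ∂π = ∫ t, s t * baseDensity t := by
    have h := integral_tensor_law ha hε hε₁ hs (continuous_const (y := (1 : ℝ)))
    simp only [one_mul, integral_baseDensity, mul_one, integral_scaled_osc one_pos, mul_zero,
      add_zero] at h
    rw [← h, ← hfst, integral_map measurable_fst.aemeasurable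
      (continuous_tensor hs continuous_const).measurable.aestronglyMeasurable]
    simp [tensor]
  have hYm : ∫ q, χ (q.2 1 0) ∂π = ∫ t, χ t * baseDensity t := by
    have h := integral_tensor_law (a := 0) (by simp) hε hε₁ (continuous_const (y := (1 : ℝ))) hχ
    simp only [one_mul, integral_baseDensity, integral_scaled_osc hε, zero_mul, add_zero] at h
    rw [← h, ← hsnd, integral_map measurable_snd.aemeasurable
      (continuous_tensor continuous_const hχ).measurable.aestronglyMeasurable]
    simp [tensor]
  have hXY : ∫ q, s (q.1 0 0) * χ (q.2 1 0) ∂π =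
      (∫ t, s t * baseDensity t) * (∫ t, χ t * baseDensity t) := by
    rw [← hXm, ← hYm]
    exact hindep.integral_fun_comp_mul_comp (by fun_prop) (by fun_prop)
      hs.measurable.aestronglyMeasurable hχ.measurable.aestronglyMeasurable
  have hle (c d : ℝ) : |s c * χ d| ≤ 1 := by
    rw [abs_mul]
    exact mul_le_one₀ (hs₁ _) (abs_nonneg _) (hχ₁ _)
  have h : ∫ q, (s (q.1 0 0) * χ (q.1 1 0) - s (q.1 0 0) * χ (q.2 1 0)) ∂π =
      a * ε * oscEnergy ^ 2 := by
    rw [integral_sub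
      (integrable_of_continuous_of_abs_le (by fun_prop) fun q => hle _ _)
      (integrable_of_continuous_of_abs_le (by fun_prop) fun q => hle _ _), hX, hXY]
    ring
  rw [← h]
  refine ofReal_integral_div_le_lintegral_cost hL₀ fun q => ?_
  have h₂ := abs_scaled_one_osc_sub_le hL one_pos (q.1 1 0) (q.2 1 0)
  rw [div_one] at h₂
  rw [← mul_sub, abs_mul, cost_eq]
  refine (mul_le_of_le_one_left (abs_nonneg _) (hs₁ _)).trans (h₂.trans ?_)
  exact mul_le_mul_of_nonneg_left (le_add_of_nonneg_left (abs_nonneg _)) hL₀.le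

/-! ### A coupling of cost `a ε²` -/

lemma lintegral_tensor_lobe {a ε : ℝ} (ha : 0 ≤ a) (hε : 0 < ε) (r : ℝ) :
    ∫⁻ x, ENNReal.ofReal (tensor (scaled a ε lobe) (fun t => scaled 1 1 lobe (t - r)) x) =
      ENNReal.ofReal (a * ε * (∫ t, lobe t) ^ 2) := by
  rw [← ofReal_integral_eq_lintegral_ofReal
    (integrable_tensor (integrable_scaled a hε integrable_lobe)
      ((integrable_scaled 1 one_pos integrable_lobe).comp_sub_right r))
    (Filter.Eventually.of_forall fun x =>
      mul_nonneg (scaled_lobe_nonneg ha _ _) (scaled_lobe_nonneg zero_le_one _ _)),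
    integral_tensor, integral_sub_right_eq_self (scaled 1 1 lobe), integral_scaled a hε,
    integral_scaled 1 one_pos]
  congr 1
  ring

/-- Translation of the first coordinate. -/
def shift (s : ℝ) (x : Traj 1 2) : Traj 1 2 := x + Pi.single 0 (Pi.single 0 s)

lemma measurable_shift (s : ℝ) : Measurable (shift s) := measurable_id.add_const _

lemma map_shift_withDensity {u v : ℝ → ℝ} (hu : Measurable u) (hv : Measurable v) (s : ℝ) :
    (volume.withDensity fun x => ENNReal.ofReal (tensor u v x)).map (shift s) =
      volume.withDensity fun x => ENNReal.ofReal (tensor (fun t => u (t - s)) v x) := by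
  ext A hA
  have hm : Measurable fun x => ENNReal.ofReal (tensor (fun t => u (t - s)) v x) :=
    (measurable_tensor (hu.comp (measurable_id.sub_const s)) hv).ennreal_ofReal
  rw [Measure.map_apply (measurable_shift s) hA, withDensity_apply _ (measurable_shift s hA),
    withDensity_apply _ hA, ← lintegral_indicator hA,
    ← lintegral_indicator (measurable_shift s hA),
    ← (measurePreserving_add_right volume
      (Pi.single 0 (Pi.single 0 s) : Traj 1 2)).lintegral_comp (hm.indicator hA)]
  refine lintegral_congr fun x => ?_
  have hx : ENNReal.ofReal (tensor (fun t => u (t - s)) v (shift s x)) =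
      ENNReal.ofReal (tensor u v x) := by
    simp [tensor, shift]
  change _ = A.indicator _ (shift s x)
  by_cases h : shift s x ∈ A
  · rw [Set.indicator_of_mem h, hx, Set.indicator_of_mem (by exact h)]
  · rw [Set.indicator_of_notMem h, Set.indicator_of_notMem (by exact h)]

lemma withDensity_ofReal_add_add {F G K : Traj 1 2 → ℝ} (hF : Measurable F) (hG : Measurable G)
    (hF₀ : ∀ x, 0 ≤ F x) (hG₀ : ∀ x, 0 ≤ G x) (hK₀ : ∀ x, 0 ≤ K x) :
    (volume.withDensity fun x => ENNReal.ofReal (F x + G x + K x)) =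
      (volume.withDensity fun x => ENNReal.ofReal (F x)) +
      (volume.withDensity fun x => ENNReal.ofReal (G x)) +
      volume.withDensity fun x => ENNReal.ofReal (K x) := by
  rw [← withDensity_add_left hF.ennreal_ofReal, ← withDensity_add_left
    (hF.ennreal_ofReal.add hG.ennreal_ofReal)]
  congr 1 with x
  simp only [Pi.add_apply]
  rw [ENNReal.ofReal_add (add_nonneg (hF₀ x) (hG₀ x)) (hK₀ x),
    ENNReal.ofReal_add (hF₀ x) (hG₀ x)]

lemma cost_self (x : Traj 1 2) : cost (x, x) = 0 := by simp [cost]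

lemma cost_shift_right (s : ℝ) (x : Traj 1 2) : cost (x, shift s x) = |s| := by
  simp [cost_eq, shift]

lemma cost_shift_left (s : ℝ) (x : Traj 1 2) : cost (shift s x, x) = |s| := by
  simp [cost_eq, shift]

lemma measurable_cost : Measurable cost := by unfold cost; fun_prop

lemma W1l1_law_le {a ε : ℝ} (ha : 0 ≤ a) (ha₁ : a ≤ 1 / 2) (hε : 0 < ε) (hε₁ : ε ≤ 1) :
    W1l1 (law a ε) (law 0 ε) ≤ ENNReal.ofReal (a * ε ^ 2) := by
  set H : ℝ → ℝ := scaled a ε lobe with hH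
  set H' : ℝ → ℝ := fun t => H (t - ε / 4) with hH'
  set b : ℝ → ℝ := scaled 1 1 lobe with hb
  set b' : ℝ → ℝ := fun t => b (t - 1 / 4) with hb'
  have hHm : Measurable H := (contDiff_scaled contDiff_lobe a ε).continuous.measurable
  have hbm : Measurable b := (contDiff_scaled contDiff_lobe 1 1).continuous.measurable
  have hHm' : Measurable H' := hHm.comp (measurable_id.sub_const _)
  have hbm' : Measurable b' := hbm.comp (measurable_id.sub_const _)
  have hH₀ : ∀ t, 0 ≤ H t := scaled_lobe_nonneg ha ε
  have hb₀ : ∀ t, 0 ≤ b t := scaled_lobe_nonneg zero_le_one 1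
  have tensor_nonneg {u v : ℝ → ℝ} (hu : ∀ t, 0 ≤ u t) (hv : ∀ t, 0 ≤ v t) (x : Traj 1 2) :
      0 ≤ tensor u v x := mul_nonneg (hu _) (hv _)
  have hHb := tensor_nonneg hH₀ hb₀
  have hHb' := tensor_nonneg hH₀ (v := b') fun t => hb₀ _
  have hH'b := tensor_nonneg (u := H') (fun t => hH₀ _) hb₀
  have hH'b' := tensor_nonneg (u := H') (v := b') (fun t => hH₀ _) fun t => hb₀ _
  set K : Traj 1 2 → ℝ := fun x =>
    tensor baseDensity baseDensity x - (tensor H' b x + tensor H b' x) with hK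
  have hKm : Measurable K :=
    (measurable_tensor contDiff_baseDensity.continuous.measurable
      contDiff_baseDensity.continuous.measurable).sub
      ((measurable_tensor hHm' hbm).add (measurable_tensor hHm hbm'))
  have hK₀ : ∀ x, 0 ≤ K x := fun x => by
    have hr := baseDensity_nonneg (x 0 0)
    have hr' := baseDensity_nonneg (x 1 0)
    have h₁ : H' (x 0 0) ≤ a * baseDensity (x 0 0) := scaled_lobe_sub_le ha hε hε₁ _
    have h₂ : b (x 1 0) ≤ 1 * baseDensity (x 1 0) :=
      scaled_lobe_le zero_le_one one_pos le_rfl _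
    have h₃ : H (x 0 0) ≤ a * baseDensity (x 0 0) := scaled_lobe_le ha hε hε₁ _
    have h₄ : b' (x 1 0) ≤ 1 * baseDensity (x 1 0) :=
      scaled_lobe_sub_le zero_le_one one_pos le_rfl _
    have h₅ := mul_le_mul h₁ h₂ (hb₀ _) (mul_nonneg ha hr)
    have h₆ := mul_le_mul h₃ h₄ (hb₀ _) (mul_nonneg ha hr)
    simp only [hK, tensor]
    nlinarith [mul_nonneg hr hr']
  set κ := volume.withDensity fun x => ENNReal.ofReal (K x)
  set η := volume.withDensity fun x => ENNReal.ofReal (tensor H b x) with hη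
  set η' := volume.withDensity fun x => ENNReal.ofReal (tensor H b' x) with hη'
  have hμ : law a ε = κ + η + η'.map (shift (ε / 4)) := by
    rw [hη', map_shift_withDensity hHm hbm', ← withDensity_ofReal_add_add hKm
      (measurable_tensor hHm hbm) hK₀ hHb hH'b', law]
    congr 1 with x
    simp only [density, hK, tensor, scaled_osc a hε, scaled_osc 1 one_pos, hH', hb', hH, hb]
    congr 1
    ring
  have hν : law 0 ε = κ + η.map (shift (ε / 4)) + η' := by
    rw [hη, map_shift_withDensity hHm hbm, ← withDensity_ofReal_add_add hKm
      (measurable_tensor hHm' hbm) hK₀ hH'b hHb', law]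
    congr 1 with x
    simp only [density_zero, hK]
    congr 1
    ring
  set S := shift (ε / 4)
  have hS : Measurable S := measurable_shift _
  have hd : Measurable fun x : Traj 1 2 => (x, x) := measurable_id.prodMk measurable_id
  have hr : Measurable fun x : Traj 1 2 => (x, S x) := measurable_id.prodMk hS
  have hl : Measurable fun x : Traj 1 2 => (S x, x) := hS.prodMk measurable_id
  set π := κ.map (fun x => (x, x)) + η.map (fun x => (x, S x)) + η'.map (fun x => (S x, x))
  have hfst : π.map Prod.fst = law a ε := by
    rw [hμ, Measure.map_add _ _ measurable_fst, Measure.map_add _ _ measurable_fst,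
      Measure.map_map measurable_fst hd, Measure.map_map measurable_fst hr,
      Measure.map_map measurable_fst hl]
    simp [Function.comp_def]
  have hsnd : π.map Prod.snd = law 0 ε := by
    rw [hν, Measure.map_add _ _ measurable_snd, Measure.map_add _ _ measurable_snd,
      Measure.map_map measurable_snd hd, Measure.map_map measurable_snd hr,
      Measure.map_map measurable_snd hl]
    simp [Function.comp_def]
  have hprob : IsProbabilityMeasure π := by
    have := isProbabilityMeasure_law (a := a) (by rw [abs_of_nonneg ha]; linarith) hε hε₁
    refine ⟨?_⟩
    rw [← Set.preimage_univ (f := Prod.fst), ← Measure.map_apply measurable_fst MeasurableSet.univ,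
      hfst, measure_univ]
  refine (iInf₂_le π ⟨hprob, hfst, hsnd⟩).trans ?_
  have hmass : η Set.univ = ENNReal.ofReal (a * ε * (∫ t, lobe t) ^ 2) := by
    rw [hη, withDensity_apply _ MeasurableSet.univ, Measure.restrict_univ,
      ← lintegral_tensor_lobe ha hε 0]
    simp only [sub_zero]
    rfl
  have hmass' : η' Set.univ = ENNReal.ofReal (a * ε * (∫ t, lobe t) ^ 2) := by
    rw [hη', withDensity_apply _ MeasurableSet.univ, Measure.restrict_univ,
      ← lintegral_tensor_lobe ha hε (1 / 4)]
  have hcm := measurable_cost.ennreal_ofReal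
  change ∫⁻ q, ENNReal.ofReal (cost q) ∂π ≤ _
  rw [lintegral_add_measure, lintegral_add_measure, lintegral_map hcm hd, lintegral_map hcm hr,
    lintegral_map hcm hl]
  simp only [cost_self, S, cost_shift_right, cost_shift_left, ENNReal.ofReal_zero, lintegral_zero,
    zero_add, lintegral_const]
  rw [hmass, hmass', ← mul_add, abs_of_pos (by positivity),
    ← ENNReal.ofReal_add (by positivity) (by positivity), ← ENNReal.ofReal_mul (by positivity)]
  refine ENNReal.ofReal_le_ofReal ?_
  have hI : (∫ t, lobe t) ^ 2 ≤ 1 := pow_le_one₀ integral_lobe_nonneg integral_lobe_le_one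
  have hae : 0 ≤ a * ε ^ 2 := by positivity
  nlinarith [mul_le_mul_of_nonneg_left hI hae]

/-- The exponent `k/(k+1)` is sharp for `AW₁` versus `W₁`: there exist
probability measures on `[0,1]²` with `k`-smooth densities of uniformly bounded Sobolev
norm, with `W₁ → 0` and `AW₁ ≥ c W₁^{k/(k+1)}`. -/
theorem aw1_w1_exponent_sharp (k : ℕ) (hk : 1 ≤ k) :
    ∃ c : ℝ, 0 < c ∧
    ∃ (μ ν : ℕ → Measure (Traj 1 2)) (f g : ℕ → Traj 1 2 → ℝ),
      (∀ n, IsProbabilityMeasure (μ n)) ∧ (∀ n, IsProbabilityMeasure (ν n)) ∧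
      (∀ n, μ n ({x : Traj 1 2 | ∀ i j, x i j ∈ Set.Icc (0 : ℝ) 1})ᶜ = 0) ∧
      (∀ n, ν n ({x : Traj 1 2 | ∀ i j, x i j ∈ Set.Icc (0 : ℝ) 1})ᶜ = 0) ∧
      (∀ n x, 0 ≤ f n x) ∧ (∀ n x, 0 ≤ g n x) ∧
      (∀ n, μ n = volume.withDensity fun x => ENNReal.ofReal (f n x)) ∧
      (∀ n, ν n = volume.withDensity fun x => ENNReal.ofReal (g n x)) ∧
      (∀ n, ContDiff ℝ (k : ℕ∞) (f n)) ∧ (∀ n, ContDiff ℝ (k : ℕ∞) (g n)) ∧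
      (∀ n, ∀ α ∈ mIdxP 1 2 k, Integrable (mderivP α (f n)) ∧ Integrable (mderivP α (g n))) ∧
      (∃ B : ℝ, ∀ n, sobNormP 1 2 k (f n) + sobNormP 1 2 k (g n) ≤ B) ∧
      (∀ n, 0 < W1l1 (μ n) (ν n)) ∧
      Filter.Tendsto (fun n => W1l1 (μ n) (ν n)) Filter.atTop (nhds 0) ∧
      (∀ n, ENNReal.ofReal c * W1l1 (μ n) (ν n) ^ ((k : ℝ) / (k + 1)) ≤ AW1l1 (μ n) (ν n)) := by
  obtain ⟨L, hL₀, hL⟩ := exists_lipschitz_osc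
  have hI : 0 < oscEnergy := integral_osc_sq_pos
  let ε : ℕ → ℝ := fun n => 1 / ((n : ℝ) + 1)
  let a : ℕ → ℝ := fun n => 1 / 2 * ε n ^ (k - 1)
  have hε (n : ℕ) : 0 < ε n := Nat.one_div_pos_of_nat
  have hε₁ (n : ℕ) : ε n ≤ 1 := by
    simpa [ε] using Nat.one_div_le_one_div (α := ℝ) (Nat.zero_le n)
  have hpow (n : ℕ) : ε n ^ (k - 1) ≤ 1 := pow_le_one₀ (hε n).le (hε₁ n)
  have ha₀ (n : ℕ) : 0 < a n := by have := hε n; positivity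
  have ha (n : ℕ) : a n ≤ 1 / 2 := by simp only [a]; linarith [hpow n]
  have haε (n : ℕ) : |a n| ≤ ε n ^ (k - 1) := by
    rw [abs_of_pos (ha₀ n)]; simp only [a]; linarith [pow_pos (hε n) (k - 1)]
  have ha₁ (n : ℕ) : |a n| ≤ 1 := (haε n).trans (hpow n)
  have haε' (n : ℕ) : a n * ε n = 1 / 2 * ε n ^ k := by
    simp only [a]; rw [mul_assoc, ← pow_succ, Nat.sub_add_cancel hk]
  have hW (n : ℕ) : W1l1 (law (a n) (ε n)) (law 0 (ε n)) ≤ ENNReal.ofReal (ε n ^ (k + 1)) := by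
    refine (W1l1_law_le (ha₀ n).le (ha n) (hε n) (hε₁ n)).trans (ENNReal.ofReal_le_ofReal ?_)
    have := pow_pos (hε n) (k + 1)
    rw [pow_two, ← mul_assoc, haε', mul_assoc, ← pow_succ]
    linarith
  refine ⟨1 / 2 * oscEnergy ^ 2 / L, by positivity, fun n => law (a n) (ε n),
    fun n => law 0 (ε n), fun n => density (a n) (ε n), fun n => density 0 (ε n),
    fun n => isProbabilityMeasure_law (ha₁ n) (hε n) (hε₁ n),
    fun n => isProbabilityMeasure_law (by simp) (hε n) (hε₁ n),
    fun n => law_compl_cube (hε n) (hε₁ n), fun n => law_compl_cube (hε n) (hε₁ n),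
    fun n => density_nonneg (ha₁ n) (hε n) (hε₁ n),
    fun n => density_nonneg (by simp) (hε n) (hε₁ n), fun n => rfl, fun n => rfl,
    fun n => (contDiff_density _ _).of_le (mod_cast le_top),
    fun n => (contDiff_density _ _).of_le (mod_cast le_top),
    fun n α _ => ⟨integrable_mderivP_density _ (hε n) α, integrable_mderivP_density _ (hε n) α⟩,
    ⟨sobBound k + sobBound k, fun n => add_le_add
      (sobNormP_density_le hk (hε n) (hε₁ n) (haε n))
      (sobNormP_density_le hk (hε n) (hε₁ n) (by simpa using (pow_pos (hε n) _).le))⟩,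
    fun n => ?_, ?_, fun n => ?_⟩
  · have hεn := hε n
    have han := ha₀ n
    exact (ENNReal.ofReal_pos.2 (by positivity)).trans_le (le_iInf₂ fun π hπ =>
      ofReal_le_lintegral_cost_of_coupling hL₀ hL (ha₁ n) (hε n) (hε₁ n) hπ)
  · refine tendsto_of_tendsto_of_tendsto_of_le_of_le tendsto_const_nhds ?_
      (fun n => zero_le) hW
    have h : Filter.Tendsto (fun n => ε n ^ (k + 1)) Filter.atTop (nhds 0) := by
      have := (tendsto_one_div_add_atTop_nhds_zero_nat (𝕜 := ℝ)).pow (k + 1)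
      rwa [zero_pow k.succ_ne_zero] at this
    simpa using ENNReal.tendsto_ofReal h
  · have hWk : W1l1 (law (a n) (ε n)) (law 0 (ε n)) ^ ((k : ℝ) / (k + 1)) ≤
        ENNReal.ofReal (ε n ^ k) := by
      have hk₀ : (0 : ℝ) ≤ (k : ℝ) / (k + 1) := by positivity
      refine (ENNReal.rpow_le_rpow (hW n) hk₀).trans_eq ?_
      rw [ENNReal.ofReal_rpow_of_nonneg (pow_nonneg (hε n).le _) hk₀, ← Real.rpow_natCast,
        ← Real.rpow_mul (hε n).le, ← Real.rpow_natCast (ε n) k]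
      congr 2
      push_cast
      field_simp
    refine (mul_le_mul_right hWk _).trans ?_
    rw [← ENNReal.ofReal_mul (by positivity)]
    refine le_iInf₂ fun π hπ => le_trans (le_of_eq ?_)
      (ofReal_le_lintegral_cost_of_bicausal hL₀ hL (ha₁ n) (hε n) (hε₁ n) hπ)
    rw [haε']
    congr 1
    ring

end
end
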